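/- arXiv:1307.7438 — 2 statements merged into one kernel-verified Lean document; each statement's English description precedes it below -/
import Mathlib

section
/- If β ∈ F̃ and q(β) = 0, then β is a positive root of the quiver Q. -/
open Polynomial Matrix BigOperators

namespace DS

noncomputable section

/-- The data of a collection of HTL normal forms `B⁽ⁱ⁾`, `i = 0,…,p`, on `ℂⁿ`:
block counts `m i`, pole orders `kk i`, block sizes `nn i j`, irregular parts
`q i j ∈ s²ℂ[s]` (pairwise distinct, degree ≤ kk i), residue blocks `R i j`,
chosen annihilating eigenvalue lists `ξ i j`, and an identification of
`Σ j, Fin (nn i j)` with `Fin n` (the block decomposition of `ℂⁿ`). -/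
structure Setup where
  p : ℕ
  n : ℕ
  hn : 0 < n
  m : Fin (p+1) → ℕ
  hm : ∀ i, 0 < m i
  kk : Fin (p+1) → ℕ
  hkk : ∀ i, 0 < kk i
  nn : ∀ i : Fin (p+1), Fin (m i) → ℕ
  q : ∀ i : Fin (p+1), Fin (m i) → Polynomial ℂ
  hq0 : ∀ i j, (q i j).coeff 0 = 0
  hq1 : ∀ i j, (q i j).coeff 1 = 0
  hqdeg : ∀ i j, (q i j).natDegree ≤ kk i
  hqdist : ∀ i : Fin (p+1), ∀ j j' : Fin (m i), j ≠ j' → q i j ≠ q i j'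
  e : ∀ i : Fin (p+1), Fin (m i) → ℕ
  he : ∀ i j, 0 < e i j
  xi : ∀ (i : Fin (p+1)) (j : Fin (m i)), Fin (e i j) → ℂ
  R : ∀ (i : Fin (p+1)) (j : Fin (m i)), Matrix (Fin (nn i j)) (Fin (nn i j)) ℂ
  hxi : ∀ i j, (((List.finRange (e i j)).map fun l => R i j - xi i j l • 1).prod) = 0
  emb : ∀ i : Fin (p+1), (Σ j : Fin (m i), Fin (nn i j)) ≃ Fin n
  hreg : ∀ i : Fin (p+1), ¬ (1 < m i ∨ i = 0) → kk i = 1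

/-- `i ∈ I_irr` : the indices of irregular singular points together with `0`. -/
def Iirr (S : Setup) (i : Fin (S.p+1)) : Prop := 1 < S.m i ∨ i = 0

instance (S : Setup) : DecidablePred (Iirr S) := fun i =>
  inferInstanceAs (Decidable (1 < S.m i ∨ i = 0))

/-- Vertices `[i,j]` for `i ∈ I_irr`. -/
abbrev Vb (S : Setup) := Σ i : {i : Fin (S.p+1) // Iirr S i}, Fin (S.m i.1)

/-- Vertices `[i,j,k]` for `0 ≤ i ≤ p`, `1 ≤ j ≤ m⁽ⁱ⁾`, `1 ≤ k ≤ e[i,j]-1`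
(the third component `κ` encodes `k = κ+1`). -/
abbrev Vr (S : Setup) := Σ i : Fin (S.p+1), Σ j : Fin (S.m i), Fin (S.e i j - 1)

/-- The vertex set `Q₀` of the quiver `Q`. -/
abbrev V (S : Setup) := Vb S ⊕ Vr S

/-- `d_i(j,j') = deg (q_j - q_j') - 2`. -/
def dcnt (S : Setup) (i : Fin (S.p+1)) (j j' : Fin (S.m i)) : ℕ :=
  (S.q i j - S.q i j').natDegree - 2

/-- The number of arrows of `Q` from a vertex `a` to a vertex `b`. -/
def arr (S : Setup) : V S → V S → ℕ
  | .inl ⟨i, j⟩, .inl ⟨i', j'⟩ =>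
      (if i.1 = 0 ∧ i'.1 ≠ 0 then 1 else 0) +
      (if h : i = i' then
        (if (j : ℕ) < (j' : ℕ) then dcnt S i.1 j (Fin.cast (by rw [h]) j') else 0)
       else 0)
  | .inl _, .inr _ => 0
  | .inr ⟨i, j, κ⟩, .inl ⟨i', j'⟩ =>
      (if i = i'.1 ∧ (j : ℕ) = (j' : ℕ) ∧ (κ : ℕ) = 0 then 1 else 0) +
      (if ¬ Iirr S i ∧ i'.1 = 0 ∧ (j : ℕ) = 0 ∧ (κ : ℕ) = 0 then 1 else 0)
  | .inr ⟨i, j, κ⟩, .inr ⟨i', j', κ'⟩ =>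
      if i = i' ∧ (j : ℕ) = (j' : ℕ) ∧ (κ : ℕ) = (κ' : ℕ) + 1 then 1 else 0

/-- The Euler form `⟨β,γ⟩` of the quiver `Q`. -/
def eform (S : Setup) (β γ : V S → ℤ) : ℤ :=
  (∑ a : V S, β a * γ a) - ∑ a : V S, ∑ b : V S, (arr S a b : ℤ) * β a * γ b

/-- The symmetrized bilinear form `(β,γ)`. -/
def bform (S : Setup) (β γ : V S → ℤ) : ℤ := eform S β γ + eform S γ β

/-- The quadratic form `q(β)`. -/
def qform (S : Setup) (β : V S → ℤ) : ℤ := eform S β β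

/-- `p(β) = 1 - q(β)`. -/
def pform (S : Setup) (β : V S → ℤ) : ℤ := 1 - qform S β

/-- The coordinate vector `ε_a`. -/
def eps (S : Setup) (a : V S) : V S → ℤ := fun b => if b = a then 1 else 0

/-- The fundamental reflection `s_a`. -/
def refl1 (S : Setup) (a : V S) (β : V S → ℤ) : V S → ℤ :=
  fun b => β b - bform S β (eps S a) * eps S a b

/-- Iterated fundamental reflections (a Weyl group element). -/
def reflList (S : Setup) (l : List (V S)) (β : V S → ℤ) : V S → ℤ :=
  l.foldr (refl1 S) β

/-- The support of a vector. -/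
def supp (S : Setup) (β : V S → ℤ) : Set (V S) := {a | β a ≠ 0}

/-- The support of `β` is connected in the underlying graph of `Q`. -/
def connSupp (S : Setup) (β : V S → ℤ) : Prop :=
  ∀ a ∈ supp S β, ∀ b ∈ supp S β,
    Relation.ReflTransGen
      (fun x y => (0 < arr S x y + arr S y x) ∧ x ∈ supp S β ∧ y ∈ supp S β) a b

/-- The fundamental set of the root system of `Q` (all vertices of `Q` are loop-free). -/
def fund (S : Setup) (β : V S → ℤ) : Prop :=
  β ≠ 0 ∧ (∀ a, 0 ≤ β a) ∧ connSupp S β ∧ ∀ a : V S, bform S β (eps S a) ≤ 0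

/-- Real roots of `Q`. -/
def isRealRoot (S : Setup) (β : V S → ℤ) : Prop :=
  ∃ (l : List (V S)) (a : V S), β = reflList S l (eps S a)

/-- Imaginary roots of `Q`. -/
def isImagRoot (S : Setup) (β : V S → ℤ) : Prop :=
  ∃ (l : List (V S)) (γ : V S → ℤ), (fund S γ ∨ fund S (-γ)) ∧ β = reflList S l γ

/-- Roots of `Q`. -/
def isRoot (S : Setup) (β : V S → ℤ) : Prop := isRealRoot S β ∨ isImagRoot S β

/-- Positive roots of `Q`. -/
def isPosRoot (S : Setup) (β : V S → ℤ) : Prop := isRoot S β ∧ ∀ a, 0 ≤ β a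

/-- The index `0` as an element of `I_irr`. -/
def i0 (S : Setup) : {i : Fin (S.p+1) // Iirr S i} := ⟨0, Or.inr rfl⟩

/-- The vertex `[0,j]`. -/
def v0 (S : Setup) (j : Fin (S.m 0)) : V S := Sum.inl ⟨i0 S, j⟩

/-- The vertex `[i,j]` for `i ∈ I_irr`. -/
def vI (S : Setup) (i : {i : Fin (S.p+1) // Iirr S i}) (j : Fin (S.m i.1)) : V S :=
  Sum.inl ⟨i, j⟩

/-- The lattice `L`: `Σ_j β_[0,j] = Σ_j β_[i,j]` for all `i ∈ I_irr ∖ {0}`. -/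
def inL (S : Setup) (β : V S → ℤ) : Prop :=
  ∀ i : {i : Fin (S.p+1) // Iirr S i}, i.1 ≠ 0 →
    (∑ j : Fin (S.m 0), β (v0 S j)) = ∑ j : Fin (S.m i.1), β (vI S i j)

/-- `L⁺ = L ∩ (ℤ≥0)^{Q₀}`. -/
def inLpos (S : Setup) (β : V S → ℤ) : Prop := inL S β ∧ ∀ a, 0 ≤ β a

/-- The dimension vector `α` (as natural numbers):
`α_[i,j] = n⁽ⁱ⁾_j`, `α_[i,j,k] = rank ∏_{l=1}^k (R⁽ⁱ⁾_j - ξ^{[i,j]}_l)`. -/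
noncomputable def alN (S : Setup) : V S → ℕ
  | .inl ⟨i, j⟩ => S.nn i.1 j
  | .inr ⟨i, j, κ⟩ =>
      ((((List.finRange (S.e i j)).take ((κ : ℕ) + 1)).map
          fun l => S.R i j - S.xi i j l • 1).prod).rank

/-- The dimension vector `α` as an integer vector. -/
noncomputable def alZ (S : Setup) : V S → ℤ := fun a => (alN S a : ℤ)

/-- The parameter `λ ∈ ℂ^{Q₀}`. -/
noncomputable def lam (S : Setup) : V S → ℂ
  | .inl ⟨i, j⟩ =>
      if h : i.1 = 0 then
        (- S.xi 0 (Fin.cast (by rw [h]) j) ⟨0, S.he 0 (Fin.cast (by rw [h]) j)⟩)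
          - ∑ i' ∈ Finset.univ.filter (fun i' : Fin (S.p+1) => ¬ Iirr S i'),
              S.xi i' ⟨0, S.hm i'⟩ ⟨0, S.he i' ⟨0, S.hm i'⟩⟩
      else - S.xi i.1 j ⟨0, S.he i.1 j⟩
  | .inr ⟨i, j, κ⟩ =>
      S.xi i j ⟨(κ : ℕ), by have := κ.2; omega⟩
        - S.xi i j ⟨(κ : ℕ) + 1, by have := κ.2; omega⟩

/-- Pairing `β · μ = Σ_a β_a μ_a` between `ℤ^{Q₀}` and `ℂ^{Q₀}`. -/
noncomputable def dotC (S : Setup) (β : V S → ℤ) (μ : V S → ℂ) : ℂ :=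
  ∑ a : V S, (β a : ℂ) * μ a

/-- `β ∈ R̃⁺_μ` : positive roots of `Q` lying in `L` with `β·μ = 0`. -/
def inRt (S : Setup) (μ : V S → ℂ) (β : V S → ℤ) : Prop :=
  isPosRoot S β ∧ inL S β ∧ dotC S β μ = 0

/-- `β ∈ ℕR̃⁺_μ` : finite sums (including `0`) of elements of `R̃⁺_μ`. -/
def inNRt (S : Setup) (μ : V S → ℂ) (β : V S → ℤ) : Prop :=
  ∃ (r : ℕ) (γ : Fin r → (V S → ℤ)), (∀ t, inRt S μ (γ t)) ∧ β = ∑ t, γ t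

/-- `β ∈ Σ̃_μ`. -/
def inSig (S : Setup) (μ : V S → ℂ) (β : V S → ℤ) : Prop :=
  inRt S μ β ∧ ∀ (r : ℕ), 2 ≤ r → ∀ γ : Fin r → (V S → ℤ),
    (∀ t, inRt S μ (γ t)) → β = ∑ t, γ t → (∑ t, pform S (γ t)) < pform S β

/-! ### The matrix side: truncated orbits.

An element `Σ_{j=1}^{k} A_j x^{-j}` of `𝔤_k*` is encoded as the polynomial matrix
`Σ_{j=1}^{k} A_j x^{k-j}` (of degree `< k`); the coadjoint `G_k`-action becomes
conjugation modulo `x^k` by polynomial matrices with invertible constant term. -/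

abbrev PMat (S : Setup) := Matrix (Fin S.n) (Fin S.n) (Polynomial ℂ)

/-- All entries have degree `< k`. -/
def degLT (S : Setup) (k : ℕ) (A : PMat S) : Prop :=
  ∀ a b, (A a b).degree < (k : ℕ)

/-- The HTL normal form `B⁽ⁱ⁾`, in the polynomial encoding. -/
noncomputable def Bmat (S : Setup) (i : Fin (S.p+1)) : PMat S :=
  Matrix.of fun a b =>
    if h : ((S.emb i).symm a).1 = ((S.emb i).symm b).1 then
      (if Fin.cast (by rw [h]) ((S.emb i).symm a).2 = ((S.emb i).symm b).2 then
          Polynomial.reflect (S.kk i) (S.q i ((S.emb i).symm b).1)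
        else 0)
        + Polynomial.C
            (S.R i ((S.emb i).symm b).1 (Fin.cast (by rw [h]) ((S.emb i).symm a).2)
              ((S.emb i).symm b).2)
          * Polynomial.X ^ (S.kk i - 1)
    else 0

/-- Membership in the truncated orbit `𝒪_{B⁽ⁱ⁾}`. -/
def inOrbit (S : Setup) (i : Fin (S.p+1)) (A : PMat S) : Prop :=
  degLT S (S.kk i) A ∧
  ∃ g : PMat S, IsUnit (g.map fun r => r.coeff 0) ∧
    ∀ a b, (Polynomial.X ^ (S.kk i) : Polynomial ℂ) ∣ (g * Bmat S i - A * g) a b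

/-- The residue matrix `A⁽ⁱ⁾₁`. -/
def resMat (S : Setup) (i : Fin (S.p+1)) (A : PMat S) : Matrix (Fin S.n) (Fin S.n) ℂ :=
  Matrix.of fun a b => (A a b).coeff (S.kk i - 1)

/-- `(A⁽ⁱ⁾)_{0≤i≤p} ∈ ∏ 𝒪_{B⁽ⁱ⁾}` with `Σ A⁽ⁱ⁾₁ = 0`. -/
def isDSElem (S : Setup) (A : ∀ _ : Fin (S.p+1), PMat S) : Prop :=
  (∀ i, inOrbit S i (A i)) ∧ (∑ i, resMat S i (A i)) = 0

/-- Irreducibility of the collection of all coefficient matrices `A⁽ⁱ⁾_j`. -/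
def irredTuple (S : Setup) (A : ∀ _ : Fin (S.p+1), PMat S) : Prop :=
  ∀ W : Submodule ℂ (Fin S.n → ℂ),
    (∀ (i : Fin (S.p+1)) (l : ℕ), ∀ v ∈ W,
        (Matrix.of fun a b => (A i a b).coeff l).mulVec v ∈ W) →
    W = ⊥ ∨ W = ⊤

/-! ### Representations of the double quiver -/

/-- A representation of the double quiver `Q̄` with dimension vector `β`:
`f a b ρ` is the matrix of `ψ_ρ : ℂ^{β a} → ℂ^{β b}` and `g a b ρ` the matrix of
`ψ_{ρ*} : ℂ^{β b} → ℂ^{β a}`, for the `ρ`-th arrow `a → b` of `Q`. -/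
structure Rep (S : Setup) (β : V S → ℕ) where
  f : ∀ a b : V S, Fin (arr S a b) → Matrix (Fin (β b)) (Fin (β a)) ℂ
  g : ∀ a b : V S, Fin (arr S a b) → Matrix (Fin (β a)) (Fin (β b)) ℂ

/-- The moment map at a vertex `c`. -/
noncomputable def moment (S : Setup) {β : V S → ℕ} (M : Rep S β) (c : V S) :
    Matrix (Fin (β c)) (Fin (β c)) ℂ :=
  (∑ a : V S, ∑ ρ : Fin (arr S a c), M.f a c ρ * M.g a c ρ)
    - ∑ b : V S, ∑ ρ : Fin (arr S c b), M.g c b ρ * M.f c b ρ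

/-- `M ∈ Rep(Q̄,β)_μ`. -/
def onMu (S : Setup) {β : V S → ℕ} (μ : V S → ℂ) (M : Rep S β) : Prop :=
  ∀ c : V S, moment S M c = μ c • (1 : Matrix (Fin (β c)) (Fin (β c)) ℂ)

/-- The block matrix `(ψ_{ρ^{[0,j]}_{[i,j']}})_{j,j'}` for `i ∈ I_irr ∖ {0}`. -/
noncomputable def crossMat (S : Setup) {β : V S → ℕ} (M : Rep S β)
    (i : {i : Fin (S.p+1) // Iirr S i}) :
    Matrix (Σ j' : Fin (S.m i.1), Fin (β (vI S i j'))) (Σ j : Fin (S.m 0), Fin (β (v0 S j))) ℂ :=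
  Matrix.of fun x y =>
    if h : 0 < arr S (v0 S y.1) (vI S i x.1) then
      M.f (v0 S y.1) (vI S i x.1) ⟨0, h⟩ x.2 y.2
    else 0

/-- All the block matrices `(ψ_{ρ^{[0,j]}_{[i,j']}})` for `i ∈ I_irr ∖ {0}` are invertible. -/
def crossBij (S : Setup) {β : V S → ℕ} (M : Rep S β) : Prop :=
  ∀ i : {i : Fin (S.p+1) // Iirr S i}, i.1 ≠ 0 →
    Function.Bijective ((crossMat S M i).mulVec)

/-- The combined map `(ψ_{ρ^{[i,1,1]}_{[0,j]}})_j : ℂ^{β [i,1,1]} → ⊕_j ℂ^{β [0,j]}`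
(for `i ∈ I_reg`). -/
noncomputable def regMatF (S : Setup) {β : V S → ℕ} (M : Rep S β)
    (i : Fin (S.p+1)) (j : Fin (S.m i)) (κ : Fin (S.e i j - 1)) :
    Matrix (Σ j' : Fin (S.m 0), Fin (β (v0 S j'))) (Fin (β (Sum.inr ⟨i, j, κ⟩))) ℂ :=
  Matrix.of fun x y =>
    if h : 0 < arr S (Sum.inr ⟨i, j, κ⟩) (v0 S x.1) then
      M.f (Sum.inr ⟨i, j, κ⟩) (v0 S x.1) ⟨0, h⟩ x.2 y
    else 0

/-- The combined map `(ψ_{(ρ^{[i,1,1]}_{[0,j]})*})_j : ⊕_j ℂ^{β [0,j]} → ℂ^{β [i,1,1]}`. -/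
noncomputable def regMatG (S : Setup) {β : V S → ℕ} (M : Rep S β)
    (i : Fin (S.p+1)) (j : Fin (S.m i)) (κ : Fin (S.e i j - 1)) :
    Matrix (Fin (β (Sum.inr ⟨i, j, κ⟩))) (Σ j' : Fin (S.m 0), Fin (β (v0 S j'))) ℂ :=
  Matrix.of fun y x =>
    if h : 0 < arr S (Sum.inr ⟨i, j, κ⟩) (v0 S x.1) then
      M.g (Sum.inr ⟨i, j, κ⟩) (v0 S x.1) ⟨0, h⟩ y x.2
    else 0

/-- `M ∈ Rep(Q̄,β)_μ^{dif}` (the open conditions). -/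
def difCond (S : Setup) {β : V S → ℕ} (M : Rep S β) : Prop :=
  crossBij S M ∧
  (∀ (i : Fin (S.p+1)), ¬ Iirr S i → ∀ (j : Fin (S.m i)) (κ : Fin (S.e i j - 1)),
      (κ : ℕ) = 0 →
      Function.Injective ((regMatF S M i j κ).mulVec) ∧
      Function.Surjective ((regMatG S M i j κ).mulVec)) ∧
  (∀ (i : Fin (S.p+1)) (j : Fin (S.m i)) (κ : Fin (S.e i j - 1)) (b : V S)
      (ρ : Fin (arr S (Sum.inr ⟨i, j, κ⟩) b)),
      (¬ Iirr S i ∧ (κ : ℕ) = 0) ∨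
      (Function.Injective ((M.f (Sum.inr ⟨i, j, κ⟩) b ρ).mulVec) ∧
       Function.Surjective ((M.g (Sum.inr ⟨i, j, κ⟩) b ρ).mulVec)))

/-- A family of subspaces forming a subrepresentation of `M`. -/
def isSubrep (S : Setup) {β : V S → ℕ} (M : Rep S β)
    (W : ∀ a : V S, Submodule ℂ (Fin (β a) → ℂ)) : Prop :=
  ∀ (a b : V S) (ρ : Fin (arr S a b)),
    (∀ v ∈ W a, (M.f a b ρ).mulVec v ∈ W b) ∧ (∀ v ∈ W b, (M.g a b ρ).mulVec v ∈ W a)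

/-- Irreducibility of a representation. -/
def irredRep (S : Setup) {β : V S → ℕ} (M : Rep S β) : Prop :=
  ∀ W, isSubrep S M W → (∀ a, W a = ⊥) ∨ (∀ a, W a = ⊤)

/-- A dimension vector is balanced if `Σ_j γ_[0,j] = Σ_j γ_[i,j]` for all `i ∈ I_irr∖{0}`. -/
def balanced (S : Setup) (γ : V S → ℕ) : Prop :=
  ∀ i : {i : Fin (S.p+1) // Iirr S i}, i.1 ≠ 0 →
    (∑ j : Fin (S.m 0), γ (v0 S j)) = ∑ j : Fin (S.m i.1), γ (vI S i j)

/-- Quasi-irreducibility: no nontrivial proper subrepresentation with balanced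
dimension vector. -/
def quasiIrred (S : Setup) {β : V S → ℕ} (M : Rep S β) : Prop :=
  ∀ W, isSubrep S M W → balanced S (fun a => Module.finrank ℂ (W a)) →
    (∀ a, W a = ⊥) ∨ (∀ a, W a = ⊤)

/-- Simultaneous conjugation of representations by `∏_a GL(β_a, ℂ)`. -/
def repConj (S : Setup) {β : V S → ℕ} (M N : Rep S β) : Prop :=
  ∃ g : ∀ a : V S, (Matrix (Fin (β a)) (Fin (β a)) ℂ)ˣ,
    (∀ a b ρ, N.f a b ρ = ((g b).val * M.f a b ρ) * ((g a)⁻¹).val) ∧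
    (∀ a b ρ, N.g a b ρ = ((g a).val * M.g a b ρ) * ((g b)⁻¹).val)

/-- Simultaneous conjugation of tuples by `GL(n, ℂ)`. -/
def tupConj (S : Setup) (A A' : ∀ _ : Fin (S.p+1), PMat S) : Prop :=
  ∃ g : (Matrix (Fin S.n) (Fin S.n) ℂ)ˣ,
    ∀ i, A' i = (g.val.map Polynomial.C) * A i * ((g⁻¹).val.map Polynomial.C)

/-- Carrier of the moduli space `ℳ*_{st}(𝐁)`. -/
abbrev MstC (S : Setup) := {A : ∀ _ : Fin (S.p+1), PMat S // isDSElem S A ∧ irredTuple S A}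

/-- The moduli space `ℳ*_{st}(𝐁)` of stable connections, identified with conjugacy
classes of irreducible elements of `∏ 𝒪_{B⁽ⁱ⁾}` with vanishing residue sum. -/
abbrev Mst (S : Setup) := Quot (fun A A' : MstC S => tupConj S A.1 A'.1)

abbrev DSC (S : Setup) := {A : ∀ _ : Fin (S.p+1), PMat S // isDSElem S A}

abbrev DSQ (S : Setup) := Quot (fun A A' : DSC S => tupConj S A.1 A'.1)

abbrev RepIrrC (S : Setup) (μ : V S → ℂ) :=
  {M : Rep S (alN S) // onMu S μ M ∧ irredRep S M}

/-- The quiver variety `𝔐^{reg}_μ(Q,α)`. -/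
abbrev Mreg (S : Setup) (μ : V S → ℂ) :=
  Quot (fun M N : RepIrrC S μ => repConj S M.1 N.1)

abbrev DifC (S : Setup) (μ : V S → ℂ) :=
  {M : Rep S (alN S) // onMu S μ M ∧ difCond S M}

abbrev DifQ (S : Setup) (μ : V S → ℂ) :=
  Quot (fun M N : DifC S μ => repConj S M.1 N.1)

abbrev QIC (S : Setup) (μ : V S → ℂ) :=
  {M : Rep S (alN S) // onMu S μ M ∧ quasiIrred S M ∧ crossBij S M}

abbrev QIQ (S : Setup) (μ : V S → ℂ) :=
  Quot (fun M N : QIC S μ => repConj S M.1 N.1)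

/-! ### `J`, `ε_𝐢`, and the equivalence relation `∼` -/

/-- `ε_𝐢 = Σ_{i ∈ I_irr} ε_{[i,j_i]}` for `𝐢 = ([i,j_i]) ∈ 𝒥`. -/
def epsJ (S : Setup) (I : ∀ i : Fin (S.p+1), Fin (S.m i)) : V S → ℤ
  | .inl ⟨i, j⟩ => if (j : ℕ) = (I i.1 : ℕ) then 1 else 0
  | .inr _ => 0

/-- The reflection `s_𝐢`. -/
def sJ (S : Setup) (I : ∀ i : Fin (S.p+1), Fin (S.m i)) (β : V S → ℤ) : V S → ℤ :=
  fun b => β b - bform S β (epsJ S I) * epsJ S I b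

/-- The quasi-fundamental set `F̃`. -/
def quasiFund (S : Setup) (β : V S → ℤ) : Prop :=
  inL S β ∧ (∀ a, 0 ≤ β a) ∧ β ≠ 0 ∧
  (∀ I : ∀ i : Fin (S.p+1), Fin (S.m i), bform S β (epsJ S I) ≤ 0) ∧
  (∀ (i : Fin (S.p+1)) (j : Fin (S.m i)) (κ : Fin (S.e i j - 1)),
      bform S β (eps S (Sum.inr ⟨i, j, κ⟩)) ≤ 0) ∧
  connSupp S β

/-- `μ_𝐢 = Σ_{i ∈ I_irr} μ_{[i,j_i]}`. -/
noncomputable def muJ (S : Setup) (I : ∀ i : Fin (S.p+1), Fin (S.m i)) (μ : V S → ℂ) : ℂ :=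
  ∑ i : {i : Fin (S.p+1) // Iirr S i}, μ (vI S i (I i.1))

/-- The transformed parameter `μ'` in the move `s_𝐢` on pairs. -/
noncomputable def muMove (S : Setup) (I : ∀ i : Fin (S.p+1), Fin (S.m i)) (μ : V S → ℂ) :
    V S → ℂ := fun a =>
  match a with
  | .inl ⟨i, j⟩ =>
      if i.1 = 0 ∧ (j : ℕ) = (I 0 : ℕ) then μ a - 2 * muJ S I μ else μ a
  | .inr ⟨i, j, κ⟩ =>
      if j = I i ∧ (κ : ℕ) = 0 then μ a + muJ S I μ else μ a

/-- The reflected parameter `r_a(μ)` for a vertex `a`. -/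
noncomputable def rvtx (S : Setup) (a : V S) (μ : V S → ℂ) : V S → ℂ :=
  fun b => μ b - ((bform S (eps S a) (eps S b) : ℤ) : ℂ) * μ a

/-- One move generating the relation `∼` on pairs `(β,μ)`. -/
def stepRel (S : Setup) :
    ((V S → ℤ) × (V S → ℂ)) → ((V S → ℤ) × (V S → ℂ)) → Prop := fun x y =>
  (∃ (i : Fin (S.p+1)) (j : Fin (S.m i)) (κ : Fin (S.e i j - 1)),
      x.2 (Sum.inr ⟨i, j, κ⟩) ≠ 0 ∧
      y = (refl1 S (Sum.inr ⟨i, j, κ⟩) x.1, rvtx S (Sum.inr ⟨i, j, κ⟩) x.2)) ∨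
  (∃ I : ∀ i : Fin (S.p+1), Fin (S.m i),
      muJ S I x.2 ≠ 0 ∧ y = (sJ S I x.1, muMove S I x.2))

/-- The smallest equivalence relation `∼` containing all the moves. -/
def pairEquiv (S : Setup) :
    ((V S → ℤ) × (V S → ℂ)) → ((V S → ℤ) × (V S → ℂ)) → Prop :=
  Relation.EqvGen (stepRel S)

/-- The vector `z^{(i₀)}` for `i₀ ∈ I_irr ∖ {0}`. -/
def zvec (S : Setup) (i' : Fin (S.p+1)) : V S → ℂ
  | .inl ⟨i, _⟩ => if i.1 = i' then 1 else if i.1 = 0 then -1 else 0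
  | .inr _ => 0


/-! ### Basic facts on the forms -/

/-- number of edges between two vertices -/
def edg (S : Setup) (a b : V S) : ℕ := arr S a b + arr S b a

theorem arr_self (S : Setup) (a : V S) : arr S a a = 0 := by
  rcases a with ⟨i, j⟩ | ⟨i, j, κ⟩ <;> simp [arr]

theorem bform_eps (S : Setup) (β : V S → ℤ) (a : V S) :
    bform S β (eps S a) = 2 * β a - ∑ b : V S, (edg S a b : ℤ) * β b := by
  unfold bform eform eps edg
  simp only [mul_ite, mul_one, mul_zero, ite_mul, one_mul, zero_mul,
    Finset.sum_ite_eq', Finset.mem_univ, if_true, Finset.sum_ite_irrel, Finset.sum_const_zero,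
    Nat.cast_add, add_mul, Finset.sum_add_distrib]
  ring

theorem bform_lin (S : Setup) (β γ : V S → ℤ) :
    bform S β γ = ∑ a : V S, γ a * bform S β (eps S a) := by
  simp only [bform_eps]
  unfold bform eform edg
  simp only [mul_sub, Finset.sum_sub_distrib, Nat.cast_add, add_mul, Finset.sum_add_distrib,
    mul_add, Finset.mul_sum]
  rw [Finset.sum_comm (f := fun a b => (arr S a b : ℤ) * β a * γ b)]
  have h1 : ∑ a : V S, γ a * (2 * β a) = ∑ a : V S, β a * γ a + ∑ a : V S, γ a * β a := by
    rw [← Finset.sum_add_distrib]; exact Finset.sum_congr rfl fun a _ => by ring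
  rw [h1]
  have h2 : ∑ y : V S, ∑ x : V S, (arr S x y : ℤ) * β x * γ y
      = ∑ x : V S, ∑ y : V S, γ x * ((arr S y x : ℤ) * β y) :=
    Finset.sum_congr rfl fun a _ => Finset.sum_congr rfl fun b _ => by ring
  have h3 : ∑ y : V S, ∑ x : V S, (arr S y x : ℤ) * γ y * β x
      = ∑ x : V S, ∑ y : V S, γ x * ((arr S x y : ℤ) * β y) :=
    Finset.sum_congr rfl fun a _ => Finset.sum_congr rfl fun b _ => by ring
  rw [h2, h3]; ring

theorem bform_nonpos_of_zero (S : Setup) (β : V S → ℤ) (hβ : ∀ a, 0 ≤ β a) (a : V S)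
    (ha : β a = 0) : bform S β (eps S a) ≤ 0 := by
  rw [bform_eps, ha]
  have : 0 ≤ ∑ b : V S, (edg S a b : ℤ) * β b :=
    Finset.sum_nonneg fun b _ => mul_nonneg (by positivity) (hβ b)
  linarith

/-- Weyl equivalence -/
def WE (S : Setup) (β γ : V S → ℤ) : Prop := ∃ l : List (V S), β = reflList S l γ

theorem WE.rfl' (S : Setup) (β : V S → ℤ) : WE S β β := ⟨[], rfl⟩

theorem WE.trans' {S : Setup} {β γ δ : V S → ℤ} (h : WE S β γ) (h' : WE S γ δ) : WE S β δ := by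
  obtain ⟨l, rfl⟩ := h
  obtain ⟨l', rfl⟩ := h'
  exact ⟨l ++ l', by simp [reflList, List.foldr_append]⟩

/-- a single reflection step -/
theorem WE.step {S : Setup} {β γ : V S → ℤ} (a : V S) (h : ∀ b, b ≠ a → γ b = β b)
    (ha : γ a = β a - bform S β (eps S a)) : WE S β γ := by
  refine ⟨[a], ?_⟩
  have key : bform S γ (eps S a) = - bform S β (eps S a) := by
    have h1 : ∑ b : V S, (edg S a b : ℤ) * γ b = ∑ b : V S, (edg S a b : ℤ) * β b := by
      refine Finset.sum_congr rfl fun b _ => ?_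
      by_cases hb : b = a
      · subst hb; simp [edg, arr_self]
      · rw [h b hb]
    have h2 := bform_eps S γ a
    have h3 := bform_eps S β a
    rw [h1] at h2
    linarith
  funext b
  simp only [reflList, List.foldr, refl1, key]
  by_cases hb : b = a
  · subst hb; simp [eps]; linarith
  · simp [eps, hb, h b hb]

/-! ### Chain functions -/

/-- chain functions: `f i j k` is the coordinate at `[i,j,k]`, with `[i,j,0] = [i,j]`. -/
abbrev CF (S : Setup) := ∀ i : Fin (S.p+1), Fin (S.m i) → ℕ → ℤ

/-- the vector attached to a chain function -/
def vec (S : Setup) (f : CF S) : V S → ℤ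
  | .inl ⟨i, j⟩ => f i.1 j 0
  | .inr ⟨i, j, κ⟩ => f i j (κ + 1)

/-- vanishing beyond the end of the legs -/
def fin0 (S : Setup) (f : CF S) : Prop := ∀ i j k, S.e i j ≤ k → f i j k = 0

/-- the chain function of a vector -/
def ch (S : Setup) (β : V S → ℤ) : CF S := fun i j k =>
  match k with
  | 0 => if h : Iirr S i then β (Sum.inl ⟨⟨i, h⟩, j⟩) else ∑ j : Fin (S.m 0), β (v0 S j)
  | k + 1 => if h : k < S.e i j - 1 then β (Sum.inr ⟨i, j, ⟨k, h⟩⟩) else 0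

theorem vec_ch (S : Setup) (β : V S → ℤ) : vec S (ch S β) = β := by
  funext a
  rcases a with ⟨i, j⟩ | ⟨i, j, κ⟩
  · simp [vec, ch, i.2]
  · simp [vec, ch, κ.2]

theorem ch_fin0 (S : Setup) (β : V S → ℤ) : fin0 S (ch S β) := by
  intro i j k hk
  have := S.he i j
  cases k with
  | zero => omega
  | succ k => simp only [ch]; rw [dif_neg (by omega)]

theorem sum_pair {ι : Type*} [Fintype ι] [DecidableEq ι] (m : ι → ℕ) (F : ∀ i, Fin (m i) → ℤ)
    (i : ι) (j : Fin (m i)) :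
    ∑ i', ∑ j' : Fin (m i'), (if i = i' ∧ (j : ℕ) = (j' : ℕ) then F i' j' else 0) = F i j := by
  rw [Finset.sum_eq_single i]
  · rw [Finset.sum_eq_single j]
    · simp
    · intro b _ hb
      rw [if_neg]
      rintro ⟨-, h⟩
      exact hb (Fin.ext h.symm)
    · simp
  · intro b _ hb
    refine Finset.sum_eq_zero fun j' _ => ?_
    rw [if_neg]
    rintro ⟨h, -⟩
    exact hb h.symm
  · simp

theorem sum_fin_at (n : ℕ) (g : ℕ → ℤ) (hg : ∀ k, n ≤ k → g k = 0) (k : ℕ) :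
    ∑ κ : Fin n, (if (κ : ℕ) = k then g κ else 0) = g k := by
  by_cases hk : k < n
  · rw [Finset.sum_eq_single (⟨k, hk⟩ : Fin n)]
    · simp
    · intro b _ hb
      rw [if_neg]
      intro h; exact hb (Fin.ext h)
    · simp
  · rw [hg k (by omega)]
    refine Finset.sum_eq_zero fun κ _ => ?_
    rw [if_neg]; have := κ.2; omega

theorem reg_m (S : Setup) {i : Fin (S.p+1)} (h : ¬ Iirr S i) : S.m i = 1 := by
  have := S.hm i
  unfold Iirr at h
  push Not at h
  omega

theorem dcnt_comm (S : Setup) (i : Fin (S.p+1)) (j j' : Fin (S.m i)) :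
    dcnt S i j j' = dcnt S i j' j := by
  unfold dcnt
  rw [← Polynomial.natDegree_neg, neg_sub]

theorem dcnt_self (S : Setup) (i : Fin (S.p+1)) (j : Fin (S.m i)) : dcnt S i j j = 0 := by
  simp [dcnt]

theorem edg_inl_inl_same (S : Setup) (i : {i : Fin (S.p+1) // Iirr S i}) (j j' : Fin (S.m i.1)) :
    edg S (Sum.inl ⟨i, j⟩) (Sum.inl ⟨i, j'⟩) = dcnt S i.1 j j' := by
  have : ¬ (i.1 = 0 ∧ i.1 ≠ 0) := by tauto
  simp only [edg, arr, if_neg this, zero_add, dif_pos]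
  simp only [Fin.cast_eq_self]
  rcases lt_trichotomy (j : ℕ) (j' : ℕ) with h | h | h
  · rw [if_pos h, if_neg (by omega)]; rfl
  · have : j = j' := Fin.ext h
    subst this
    simp [dcnt_self]
  · rw [if_neg (by omega), if_pos h, dcnt_comm]; simp

theorem edg_inl_inl_ne (S : Setup) (i i' : {i : Fin (S.p+1) // Iirr S i}) (h : i ≠ i')
    (j : Fin (S.m i.1)) (j' : Fin (S.m i'.1)) :
    edg S (Sum.inl ⟨i, j⟩) (Sum.inl ⟨i', j'⟩) =
      if (i.1 = 0 ∧ i'.1 ≠ 0) ∨ (i'.1 = 0 ∧ i.1 ≠ 0) then 1 else 0 := by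
  simp only [edg, arr, dif_neg h, dif_neg (Ne.symm h)]
  split_ifs <;> first | rfl | tauto

theorem edg_inl_inr (S : Setup) (i' : {i : Fin (S.p+1) // Iirr S i}) (j' : Fin (S.m i'.1))
    (x : Vr S) : edg S (Sum.inl ⟨i', j'⟩) (Sum.inr x) = arr S (Sum.inr x) (Sum.inl ⟨i', j'⟩) := by
  obtain ⟨i, j, κ⟩ := x
  simp [edg, arr]

theorem edg_comm (S : Setup) (a b : V S) : edg S a b = edg S b a := by
  unfold edg; omega

/-! ### The form on chain vectors -/

theorem bform_inr (S : Setup) (f : CF S) (hf : fin0 S f) (i : Fin (S.p+1)) (j : Fin (S.m i))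
    (κ : Fin (S.e i j - 1)) :
    bform S (vec S f) (eps S (Sum.inr ⟨i, j, κ⟩)) = 2 * f i j (κ + 1)
      - (if (κ : ℕ) = 0 ∧ ¬ Iirr S i then ∑ j : Fin (S.m 0), f 0 j 0 else f i j κ)
      - f i j (κ + 2) := by
  rw [bform_eps, Fintype.sum_sum_type, Fintype.sum_sigma, Fintype.sum_sigma]
  have e1 : ∑ i' : {i : Fin (S.p+1) // Iirr S i}, ∑ j' : Fin (S.m i'.1),
      (edg S (Sum.inr ⟨i, j, κ⟩) (Sum.inl ⟨i', j'⟩) : ℤ) * vec S f (Sum.inl ⟨i', j'⟩)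
      = if (κ : ℕ) = 0 then (if Iirr S i then f i j 0 else ∑ j : Fin (S.m 0), f 0 j 0) else 0 := by
    simp only [edg_comm S (Sum.inr _), edg_inl_inr]
    by_cases hκ : (κ : ℕ) = 0
    · by_cases hi : Iirr S i
      · simp only [arr, hκ, hi, vec, not_true, false_and, if_false, add_zero, if_true, and_true]
        have := sum_pair (ι := {i : Fin (S.p+1) // Iirr S i}) (fun i => S.m i.1)
          (fun i j => f i.1 j 0) ⟨i, hi⟩ j
        simp only at this
        rw [← this]
        refine Finset.sum_congr rfl fun i' _ => Finset.sum_congr rfl fun j' _ => ?_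
        simp only [Subtype.ext_iff]
        split_ifs <;> simp
      · have hj : (j : ℕ) = 0 := by have := j.2; have := reg_m S hi; omega
        have hne : ∀ i' : {i : Fin (S.p+1) // Iirr S i}, i ≠ i'.1 := by
          rintro i' rfl; exact hi i'.2
        simp only [arr, hκ, hi, vec, hj, hne, not_false_eq_true, false_and, if_false, zero_add,
          if_true, and_true, true_and]
        rw [Finset.sum_eq_single (⟨0, Or.inr rfl⟩ : {i : Fin (S.p+1) // Iirr S i})]
        · simp
        · intro b _ hb
          have : b.1 ≠ 0 := fun h => hb (Subtype.ext h)
          simp [this]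
        · simp
    · simp [arr, hκ]
  have e2 : ∑ i', ∑ x : (Σ j' : Fin (S.m i'), Fin (S.e i' j' - 1)),
      (edg S (Sum.inr ⟨i, j, κ⟩) (Sum.inr ⟨i', x⟩) : ℤ) * vec S f (Sum.inr ⟨i', x⟩)
      = f i j (κ + 2) + if (κ : ℕ) = 0 then 0 else f i j κ := by
    simp only [Fintype.sum_sigma]
    have : ∀ i' j', ∑ κ' : Fin (S.e i' j' - 1),
        (edg S (Sum.inr ⟨i, j, κ⟩) (Sum.inr ⟨i', j', κ'⟩) : ℤ) * vec S f (Sum.inr ⟨i', j', κ'⟩)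
        = if i = i' ∧ (j : ℕ) = (j' : ℕ) then
            f i' j' (κ + 2) + (if (κ : ℕ) = 0 then 0 else f i' j' κ) else 0 := by
      intro i' j'
      by_cases h : i = i' ∧ (j : ℕ) = (j' : ℕ)
      · rw [if_pos h]
        obtain ⟨rfl, h⟩ := h
        have := Fin.ext h
        subst this
        have a1 := sum_fin_at (S.e i j - 1) (fun k => f i j (k + 1))
          (fun k hk => hf i j _ (by omega)) (κ + 1)
        rw [← a1]
        have a2 : (if (κ : ℕ) = 0 then 0 else f i j κ) = ∑ κ' : Fin (S.e i j - 1),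
            (if (κ : ℕ) = κ' + 1 then f i j (κ' + 1) else 0) := by
          split_ifs with h0
          · symm
            refine Finset.sum_eq_zero fun x _ => ?_
            rw [if_neg (by omega)]
          · have a3 := sum_fin_at (S.e i j - 1) (fun k => f i j (k + 1))
              (fun k hk => hf i j _ (by omega)) (κ - 1)
            rw [show (κ : ℕ) - 1 + 1 = κ by omega] at a3
            rw [← a3]
            refine Finset.sum_congr rfl fun x _ => ?_
            congr 1
            apply propext
            omega
        rw [a2, ← Finset.sum_add_distrib]
        refine Finset.sum_congr rfl fun x _ => ?_
        simp only [edg, arr, vec, true_and]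
        push_cast
        rw [add_mul]
        split_ifs <;> first | omega | simp
      · rw [if_neg h]
        refine Finset.sum_eq_zero fun x _ => ?_
        have h1 : ¬ (i = i' ∧ (j : ℕ) = (j' : ℕ) ∧ (κ : ℕ) = (x : ℕ) + 1) := by tauto
        have h2 : ¬ (i' = i ∧ (j' : ℕ) = (j : ℕ) ∧ (x : ℕ) = (κ : ℕ) + 1) := by
          rintro ⟨a, b, -⟩; exact h ⟨a.symm, b.symm⟩
        simp only [edg, arr, if_neg h1, if_neg h2]
        simp
    simp only [this]
    exact sum_pair S.m (fun i' j' => f i' j' (κ + 2) + if (κ : ℕ) = 0 then 0 else f i' j' κ) i j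
  rw [e1, e2]
  simp only [vec]
  by_cases hκ : (κ : ℕ) = 0 <;> by_cases hi : Iirr S i <;> simp [hκ, hi] <;> ring

/-- neighbours of `[0,*]` in direction `i` -/
def nb (S : Setup) (f : CF S) (i : Fin (S.p+1)) : ℤ :=
  if i = 0 then 0 else if Iirr S i then ∑ j, f i j 0 else ∑ j, f i j 1

theorem sum_inl_inr (S : Setup) (f : CF S) (hf : fin0 S f) (i : {i : Fin (S.p+1) // Iirr S i})
    (j : Fin (S.m i.1)) :
    ∑ i', ∑ x : (Σ j' : Fin (S.m i'), Fin (S.e i' j' - 1)),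
      (edg S (Sum.inl ⟨i, j⟩) (Sum.inr ⟨i', x⟩) : ℤ) * vec S f (Sum.inr ⟨i', x⟩)
    = f i.1 j 1 + if i.1 = 0 then
        ∑ i', (if Iirr S i' then 0 else ∑ j', f i' j' 1) else 0 := by
  simp only [Fintype.sum_sigma, edg_inl_inr]
  have : ∀ i' j', ∑ κ' : Fin (S.e i' j' - 1),
        (arr S (Sum.inr ⟨i', j', κ'⟩) (Sum.inl ⟨i, j⟩) : ℤ) * vec S f (Sum.inr ⟨i', j', κ'⟩)
        = (if i.1 = i' ∧ (j : ℕ) = (j' : ℕ) then f i' j' 1 else 0)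
          + (if i.1 = 0 then (if Iirr S i' then 0 else f i' j' 1) else 0) := by
    intro i' j'
    have a1 := sum_fin_at (S.e i' j' - 1) (fun k => f i' j' (k + 1))
          (fun k hk => hf i' j' _ (by omega)) 0
    have a2 : (if i.1 = i' ∧ (j : ℕ) = (j' : ℕ) then f i' j' 1 else 0)
        = ∑ κ' : Fin (S.e i' j' - 1), if i.1 = i' ∧ (j : ℕ) = (j' : ℕ) then
            (if (κ' : ℕ) = 0 then f i' j' (κ' + 1) else 0) else 0 := by
      split_ifs with h
      · exact a1.symm
      · simp
    have a3 : (if i.1 = 0 then (if Iirr S i' then 0 else f i' j' 1) else 0)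
        = ∑ κ' : Fin (S.e i' j' - 1), if i.1 = 0 then (if Iirr S i' then 0 else
            (if (κ' : ℕ) = 0 then f i' j' (κ' + 1) else 0)) else 0 := by
      split_ifs with h h'
      · simp
      · exact a1.symm
      · simp
    rw [a2, a3, ← Finset.sum_add_distrib]
    refine Finset.sum_congr rfl fun x _ => ?_
    have hj : ¬ Iirr S i' → (j' : ℕ) = 0 := by
      intro hi; have := j'.2; have := reg_m S hi; omega
    simp only [arr, vec]
    push_cast
    rw [add_mul]
    congr 1
    · by_cases h0 : (x : ℕ) = 0
      · simp only [h0, and_true, if_true]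
        by_cases h1 : i' = i.1 ∧ (j' : ℕ) = (j : ℕ)
        · have h2 : i.1 = i' ∧ (j : ℕ) = (j' : ℕ) := ⟨h1.1.symm, h1.2.symm⟩
          rw [if_pos h1, if_pos h2]; simp
        · have h2 : ¬ (i.1 = i' ∧ (j : ℕ) = (j' : ℕ)) := fun h => h1 ⟨h.1.symm, h.2.symm⟩
          rw [if_neg h1, if_neg h2]; simp
      · simp [h0]
    · by_cases hi : Iirr S i'
      · simp [hi]
      · simp only [hi, hj hi, not_false_eq_true, true_and]
        by_cases h0 : i.1 = 0 <;> by_cases h1 : (x : ℕ) = 0 <;> simp [h0, h1]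
  simp only [this, Finset.sum_add_distrib]
  congr 1
  · exact sum_pair S.m (fun i' j' => f i' j' 1) i.1 j
  · split_ifs with h
    · refine Finset.sum_congr rfl fun i' _ => ?_
      split_ifs <;> simp
    · simp

theorem bform_inl (S : Setup) (f : CF S) (hf : fin0 S f) (i : Fin (S.p+1)) (hi : Iirr S i)
    (h0 : i ≠ 0) (j : Fin (S.m i)) :
    bform S (vec S f) (eps S (Sum.inl ⟨⟨i, hi⟩, j⟩)) = 2 * f i j 0
      - ∑ j', (dcnt S i j j' : ℤ) * f i j' 0 - ∑ j : Fin (S.m 0), f 0 j 0 - f i j 1 := by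
  rw [bform_eps, Fintype.sum_sum_type, Fintype.sum_sigma, Fintype.sum_sigma,
    sum_inl_inr S f hf ⟨i, hi⟩ j, if_neg h0]
  have hne : (⟨i, hi⟩ : {i : Fin (S.p+1) // Iirr S i}) ≠ ⟨0, Or.inr rfl⟩ :=
    fun h => h0 (congrArg Subtype.val h)
  rw [Fintype.sum_eq_add (⟨i, hi⟩ : {i : Fin (S.p+1) // Iirr S i})
    (⟨0, Or.inr rfl⟩ : {i : Fin (S.p+1) // Iirr S i}) hne]
  · simp only [edg_inl_inl_same, edg_inl_inl_ne S _ _ hne]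
    simp [vec, h0]
    ring
  · rintro x ⟨hx, hx0⟩
    refine Finset.sum_eq_zero fun j' _ => ?_
    rw [edg_inl_inl_ne S _ _ (Ne.symm hx)]
    have : x.1 ≠ 0 := fun h => hx0 (Subtype.ext h)
    simp [h0, this]

theorem bform_zero (S : Setup) (f : CF S) (hf : fin0 S f) (j : Fin (S.m 0)) :
    bform S (vec S f) (eps S (v0 S j)) = 2 * f 0 j 0
      - ∑ j', (dcnt S 0 j j' : ℤ) * f 0 j' 0 - f 0 j 1 - ∑ i, nb S f i := by
  have hz : Iirr S 0 := Or.inr rfl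
  change bform S (vec S f) (eps S (Sum.inl ⟨⟨0, hz⟩, j⟩)) = _
  rw [bform_eps, Fintype.sum_sum_type, Fintype.sum_sigma, Fintype.sum_sigma,
    sum_inl_inr S f hf ⟨0, hz⟩ j, if_pos rfl]
  have e1 : ∑ i' : {i : Fin (S.p+1) // Iirr S i}, ∑ j' : Fin (S.m i'.1),
      (edg S (Sum.inl ⟨⟨0, hz⟩, j⟩) (Sum.inl ⟨i', j'⟩) : ℤ) * vec S f (Sum.inl ⟨i', j'⟩)
      = ∑ i' : {i : Fin (S.p+1) // Iirr S i},
        ((if i'.1 = 0 then ∑ j', (dcnt S 0 j j' : ℤ) * f 0 j' 0 else 0)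
          + if i'.1 = 0 then 0 else ∑ j', f i'.1 j' 0) := by
    refine Finset.sum_congr rfl fun i' _ => ?_
    by_cases h : i' = ⟨0, hz⟩
    · subst h
      rw [if_pos rfl, if_pos rfl, add_zero]
      refine Finset.sum_congr rfl fun j' _ => ?_
      rw [edg_inl_inl_same]; rfl
    · have h' : i'.1 ≠ 0 := fun h' => h (Subtype.ext h')
      rw [if_neg h', if_neg h', zero_add]
      refine Finset.sum_congr rfl fun j' _ => ?_
      rw [edg_inl_inl_ne S _ _ (Ne.symm h)]
      simp [h', vec]
  rw [e1, Finset.sum_add_distrib]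
  have e2 : ∑ i' : {i : Fin (S.p+1) // Iirr S i},
      (if i'.1 = 0 then ∑ j', (dcnt S 0 j j' : ℤ) * f 0 j' 0 else 0)
      = ∑ j', (dcnt S 0 j j' : ℤ) * f 0 j' 0 := by
    rw [Finset.sum_eq_single (⟨0, hz⟩ : {i : Fin (S.p+1) // Iirr S i})]
    · rw [if_pos rfl]
    · intro b _ hb
      have : b.1 ≠ 0 := fun h => hb (Subtype.ext h)
      rw [if_neg this]
    · simp
  have e3 : ∑ i' : {i : Fin (S.p+1) // Iirr S i},
      (if i'.1 = 0 then 0 else ∑ j', f i'.1 j' 0)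
      = ∑ i', if Iirr S i' then (if i' = 0 then 0 else ∑ j', f i' j' 0) else 0 := by
    rw [← Finset.sum_filter]
    exact Finset.sum_subtype_of_mem (p := Iirr S) (fun i' => if i' = 0 then 0 else ∑ j', f i' j' 0)
      (s := Finset.univ.filter (Iirr S)) (by simp) ▸ by
        refine Finset.sum_congr ?_ fun _ _ => rfl
        ext x; simp [x.2]
  have e4 : ∑ i, nb S f i
      = (∑ i', if Iirr S i' then (if i' = 0 then 0 else ∑ j', f i' j' 0) else 0)
        + ∑ i', (if Iirr S i' then 0 else ∑ j', f i' j' 1) := by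
    rw [← Finset.sum_add_distrib]
    refine Finset.sum_congr rfl fun i' _ => ?_
    unfold nb
    by_cases h : i' = 0
    · have : Iirr S i' := Or.inr h
      simp [h, this]
      intro h'; exact absurd (Or.inr rfl) h'
    · by_cases h' : Iirr S i' <;> simp [h, h']
  rw [e2, e3, e4]
  simp only [vec]
  ring

/-! ### Legs -/

theorem leg_anti (b : ℕ → ℤ) (E : ℕ) (h0 : ∀ k, 0 ≤ b k) (hz : ∀ k, E ≤ k → b k = 0)
    (hc : ∀ k, k + 1 < E → 2 * b (k + 1) ≤ b k + b (k + 2)) : ∀ k, b (k + 1) ≤ b k := by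
  have key : ∀ n k, E ≤ k + 1 + n → b (k + 1) ≤ b k := by
    intro n
    induction n with
    | zero => intro k hk; rw [hz (k + 1) (by omega)]; exact h0 k
    | succ n ih =>
      intro k hk
      by_cases h : k + 1 < E
      · have h1 := ih (k + 1) (by omega)
        have h2 := hc k h
        have e : k + 1 + 1 = k + 2 := rfl
        rw [e] at h1
        linarith
      · rw [hz (k + 1) (by omega)]; exact h0 k
  exact fun k => key E k (by omega)

theorem leg_delta_pos (b : ℕ → ℤ) (E : ℕ) (hz : ∀ k, E ≤ k → b k = 0)
    (ha : ∀ k, b (k + 1) ≤ b k)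
    (he : ∀ k, b (k + 1) ≠ 0 → 2 * b (k + 1) = b k + b (k + 2)) (hb : 0 < b 0) : b 1 < b 0 := by
  by_contra hcon
  have h1 : b 1 = b 0 := le_antisymm (ha 0) (not_lt.mp hcon)
  have : ∀ k, b k = b 0 ∧ b (k + 1) = b 0 := by
    intro k
    induction k with
    | zero => exact ⟨rfl, h1⟩
    | succ k ih =>
      refine ⟨ih.2, ?_⟩
      have := he k (by rw [ih.2]; exact hb.ne')
      have e : k + 1 + 1 = k + 2 := rfl
      rw [e]
      linarith [ih.1, ih.2]
  have h2 := (this E).1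
  rw [hz E le_rfl] at h2
  omega

theorem leg_anti_zero (b : ℕ → ℤ) (h0 : ∀ k, 0 ≤ b k)
    (ha : ∀ k, b (k + 1) ≤ b k) (n : ℕ) (hn : b n = 0) (k : ℕ) (hk : n ≤ k) : b k = 0 := by
  have := antitone_nat_of_succ_le ha hk
  have := h0 k
  omega

/-- partial shift -/
def shn (S : Setup) (f : CF S) (i₀ : Fin (S.p+1)) (n : ℕ) : CF S :=
  fun i j k => if i = i₀ ∧ k < n then f i j (k + 1) else f i j k

/-- shift of the chains at `i₀` -/
def shf (S : Setup) (f : CF S) (i₀ : Fin (S.p+1)) : CF S :=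
  fun i j k => if i = i₀ then f i j (k + 1) else f i j k

theorem shn_fin0 (S : Setup) (f : CF S) (hf : fin0 S f) (i₀ : Fin (S.p+1)) (n : ℕ) :
    fin0 S (shn S f i₀ n) := by
  intro i j k hk
  unfold shn
  split_ifs
  · exact hf i j _ (by omega)
  · exact hf i j k hk

theorem shf_fin0 (S : Setup) (f : CF S) (hf : fin0 S f) (i₀ : Fin (S.p+1)) :
    fin0 S (shf S f i₀) := by
  intro i j k hk
  unfold shf
  split_ifs
  · exact hf i j _ (by omega)
  · exact hf i j k hk

theorem vec_congr (S : Setup) (f g : CF S) (h0 : ∀ i j, Iirr S i → f i j 0 = g i j 0)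
    (h1 : ∀ i j k, f i j (k + 1) = g i j (k + 1)) : vec S f = vec S g := by
  funext a
  rcases a with ⟨i, j⟩ | ⟨i, j, κ⟩
  · exact h0 i.1 j i.2
  · exact h1 i j κ

theorem shift_WE (S : Setup) (f : CF S) (hf : fin0 S f) (i₀ : Fin (S.p+1)) (j₀ : Fin (S.m i₀))
    (hz : ∀ j, j ≠ j₀ → ∀ k, f i₀ j k = 0)
    (head1 : ∀ hi : Iirr S i₀,
      bform S (vec S f) (eps S (Sum.inl ⟨⟨i₀, hi⟩, j₀⟩)) = f i₀ j₀ 0 - f i₀ j₀ 1)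
    (head2 : ¬ Iirr S i₀ → ∑ j : Fin (S.m 0), f 0 j 0 = f i₀ j₀ 1) :
    WE S (vec S f) (vec S (shf S f i₀)) := by
  have key : ∀ n, n ≤ S.e i₀ j₀ → WE S (vec S f) (vec S (shn S f i₀ n)) := by
    intro n
    induction n with
    | zero =>
      intro _
      have : vec S (shn S f i₀ 0) = vec S f := by
        apply vec_congr <;> intros <;> simp [shn]
      rw [this]; exact WE.rfl' _ _
    | succ n ih =>
      intro hn
      refine (ih (by omega)).trans' ?_
      rcases Nat.eq_zero_or_pos n with rfl | hpos
      · by_cases hi : Iirr S i₀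
        · have e0 : vec S (shn S f i₀ 0) = vec S f := by
            apply vec_congr <;> intros <;> simp [shn]
          rw [e0]
          refine WE.step (Sum.inl ⟨⟨i₀, hi⟩, j₀⟩) ?_ ?_
          · rintro (⟨⟨i, hi'⟩, j⟩ | ⟨i, j, κ⟩) hb
            · simp only [vec, shn]
              split_ifs with h
              · obtain ⟨rfl, -⟩ := h
                have hj : j ≠ j₀ := by rintro rfl; exact hb rfl
                rw [hz j hj, hz j hj]
              · rfl
            · simp [vec, shn]
          · rw [head1 hi]
            simp [vec, shn]
        · have e0 : vec S (shn S f i₀ (0 + 1)) = vec S (shn S f i₀ 0) := by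
            apply vec_congr
            · intro i j h
              have : i ≠ i₀ := by rintro rfl; exact hi h
              simp [shn, this]
            · intros; simp [shn]
          rw [e0]; exact WE.rfl' _ _
      · have hlt : n - 1 < S.e i₀ j₀ - 1 := by omega
        refine WE.step (Sum.inr ⟨i₀, j₀, ⟨n - 1, hlt⟩⟩) ?_ ?_
        · rintro (⟨⟨i, hi'⟩, j⟩ | ⟨i, j, κ⟩) hb
          · simp only [vec, shn]
            split_ifs <;> first | rfl | omega
          · simp only [vec, shn]
            by_cases h : i = i₀
            · subst h
              by_cases hj : j = j₀
              · subst hj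
                have : (κ : ℕ) ≠ n - 1 := by
                  intro h; apply hb
                  have : κ = ⟨n - 1, hlt⟩ := Fin.ext h
                  rw [this]
                split_ifs <;> first | rfl | omega
              · simp [hz j hj]
            · simp [h]
        · rw [bform_inr S _ (shn_fin0 S f hf i₀ n)]
          have e1 : n - 1 + 1 = n := by omega
          have e2 : n - 1 + 2 = n + 1 := by omega
          simp only [vec, e1, e2]
          have g1 : shn S f i₀ n i₀ j₀ n = f i₀ j₀ n := by simp [shn]
          have g2 : shn S f i₀ n i₀ j₀ (n + 1) = f i₀ j₀ (n + 1) := by simp [shn]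
          have g3 : shn S f i₀ n i₀ j₀ (n - 1) = f i₀ j₀ n := by
            simp only [shn, true_and]; rw [if_pos (by omega), e1]
          have g4 : shn S f i₀ (n + 1) i₀ j₀ n = f i₀ j₀ (n + 1) := by simp [shn]
          rw [g1, g2, g3, g4]
          split_ifs with h
          · obtain ⟨h, hi⟩ := h
            have hn1 : n = 1 := by omega
            subst hn1
            have h0 : (0 : Fin (S.p+1)) ≠ i₀ := by rintro rfl; exact hi (Or.inr rfl)
            simp only [shn, h0, false_and, if_false]
            rw [head2 hi]; ring
          · ring
  have e : vec S (shn S f i₀ (S.e i₀ j₀)) = vec S (shf S f i₀) := by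
    have : ∀ i j k, shn S f i₀ (S.e i₀ j₀) i j k = shf S f i₀ i j k := by
      intro i j k
      unfold shn shf
      by_cases h : i = i₀
      · subst h
        by_cases hj : j = j₀
        · subst hj
          by_cases hk : k < S.e i j
          · simp [hk]
          · simp [hk, hf i j k (by omega), hf i j (k + 1) (by omega)]
        · simp [hz j hj]
      · simp [h]
    apply vec_congr <;> intros <;> apply this
  rw [← e]
  exact key _ le_rfl

/-! ### The numerical core -/

/-- local defect -/
def yv (S : Setup) (b : CF S) (r : ℤ) (i : Fin (S.p+1)) (j : Fin (S.m i)) : ℤ :=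
  2 * r - b i j 0 - (b i j 0 - b i j 1) + ∑ j', (dcnt S i j j' : ℤ) * b i j' 0

/-- what we extract from the hypotheses -/
structure Core (S : Setup) (b : CF S) (r : ℤ) (Y : Fin (S.p+1) → ℤ) : Prop where
  fin : fin0 S b
  nn : ∀ i j k, 0 ≤ b i j k
  rpos : 0 < r
  sum : ∀ i, ∑ j, b i j 0 = r
  anti : ∀ i j k, b i j (k + 1) ≤ b i j k
  conv : ∀ i j k, b i j (k + 1) ≠ 0 → 2 * b i j (k + 1) = b i j k + b i j (k + 2)
  hY : ∀ i j, b i j 0 ≠ 0 → yv S b r i j = Y i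
  sumY : ∑ i, Y i = 2 * r

theorem sum_reg (S : Setup) {i : Fin (S.p+1)} (hi : ¬ Iirr S i) (j : Fin (S.m i))
    (g : Fin (S.m i) → ℤ) : ∑ j', g j' = g j := by
  have hm := reg_m S hi
  have : ∀ j' : Fin (S.m i), j' = j := fun j' => Fin.ext (by have := j.2; have := j'.2; omega)
  rw [Finset.sum_eq_single j]
  · intro b _ hb; exact absurd (this b) hb
  · simp

/-- the value of the form at `[i,j]`, uniformly written -/
def bt (S : Setup) (b : CF S) (r : ℤ) (i : Fin (S.p+1)) (j : Fin (S.m i)) : ℤ :=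
  (if i = 0 then 2 * r - ∑ i, nb S b i else 0) + nb S b i - yv S b r i j

theorem bt_reg (S : Setup) (b : CF S) (r : ℤ) (hsum : ∀ i, ∑ j, b i j 0 = r) (i : Fin (S.p+1))
    (hi : ¬ Iirr S i) (j : Fin (S.m i)) : bt S b r i j = 0 := by
  have h0 : i ≠ 0 := fun h => hi (Or.inr h)
  have h1 := hsum i
  rw [sum_reg S hi j] at h1
  simp only [bt, nb, yv, if_neg h0, if_neg hi]
  rw [sum_reg S hi j, sum_reg S hi j, dcnt_self]
  simp; linarith

theorem bt_irr (S : Setup) (b : CF S) (r : ℤ) (hf : fin0 S b) (hsum : ∀ i, ∑ j, b i j 0 = r)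
    (i : Fin (S.p+1)) (hi : Iirr S i) (j : Fin (S.m i)) :
    bform S (vec S b) (eps S (Sum.inl ⟨⟨i, hi⟩, j⟩)) = bt S b r i j := by
  by_cases h0 : i = 0
  · subst h0
    have := bform_zero S b hf j
    rw [show v0 S j = Sum.inl ⟨⟨0, hi⟩, j⟩ from rfl] at this
    rw [this]
    have : nb S b 0 = 0 := by simp [nb]
    rw [bt, this, if_pos rfl, yv]
    ring
  · rw [bform_inl S b hf i hi h0 j]
    simp only [bt, nb, if_neg h0, if_pos hi, hsum, yv]
    ring

theorem bt_sum (S : Setup) (b : CF S) (r : ℤ) (I : ∀ i : Fin (S.p+1), Fin (S.m i)) :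
    ∑ i, bt S b r i (I i) = 2 * r - ∑ i, yv S b r i (I i) := by
  simp only [bt, Finset.sum_sub_distrib, Finset.sum_add_distrib]
  simp

theorem sum_irr_all (S : Setup) (g : Fin (S.p+1) → ℤ) (hg : ∀ i, ¬ Iirr S i → g i = 0) :
    ∑ i : {i : Fin (S.p+1) // Iirr S i}, g i.1 = ∑ i, g i := by
  rw [← Finset.sum_filter_add_sum_filter_not Finset.univ (Iirr S) g]
  rw [Finset.sum_eq_zero (s := Finset.univ.filter (fun i => ¬ Iirr S i))
    (fun i hi => hg i (by simpa using hi)), add_zero]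
  exact (Finset.sum_subtype (Finset.univ.filter (Iirr S)) (by simp) g).symm

theorem core_exists (S : Setup) (β : V S → ℤ) (hβ : quasiFund S β) (hq : qform S β = 0) :
    ∃ r Y, Core S (ch S β) r Y := by
  obtain ⟨hL, hnn, hne, hJ, hleg, -⟩ := hβ
  set b := ch S β with hb
  have hvec : vec S b = β := vec_ch S β
  have hf : fin0 S b := ch_fin0 S β
  set r := ∑ j : Fin (S.m 0), β (v0 S j) with hr
  have hbz : ∀ j, b 0 j 0 = β (v0 S j) := by
    intro j; rw [hb]; simp only [ch]
    rw [dif_pos (show Iirr S 0 from Or.inr rfl)]; rfl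
  have hr0 : 0 ≤ r := Finset.sum_nonneg fun j _ => hnn _
  have hbnn : ∀ i j k, 0 ≤ b i j k := by
    intro i j k
    rw [hb]
    cases k with
    | zero => simp only [ch]; split_ifs; exacts [hnn _, hr0]
    | succ k => simp only [ch]; split_ifs; exacts [hnn _, le_rfl]
  have hsum : ∀ i, ∑ j, b i j 0 = r := by
    intro i
    by_cases h0 : i = 0
    · subst h0; simp only [hbz]; rfl
    by_cases hi : Iirr S i
    · rw [hr, hL ⟨i, hi⟩ h0]
      refine Finset.sum_congr rfl fun j _ => ?_
      rw [hb]; simp only [ch]; rw [dif_pos hi]; rfl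
    · rw [sum_reg S hi ⟨0, S.hm i⟩, hb]
      simp only [ch]; rw [dif_neg hi]
  have hsum0 : ∑ j : Fin (S.m 0), b 0 j 0 = r := hsum 0
  have hreg0 : ∀ i, ¬ Iirr S i → ∀ j, b i j 0 = r := by
    intro i hi j
    have := hsum i; rwa [sum_reg S hi j] at this
  have hinr : ∀ i j (κ : Fin (S.e i j - 1)), bform S β (eps S (Sum.inr ⟨i, j, κ⟩))
      = 2 * b i j (κ + 1) - b i j κ - b i j (κ + 2) := by
    intro i j κ
    rw [← hvec, bform_inr S b hf, hsum0]
    split_ifs with h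
    · rw [h.1, hreg0 i h.2 j]
    · rfl
  have hanti : ∀ i j k, b i j (k + 1) ≤ b i j k := by
    intro i j
    refine leg_anti (b i j) (S.e i j) (hbnn i j) (hf i j) fun k hk => ?_
    have h1 := hleg i j ⟨k, by omega⟩
    rw [hinr] at h1
    simp only at h1
    linarith
  have hrpos : 0 < r := by
    rcases hr0.lt_or_eq with h | h
    · exact h
    · exfalso
      apply hne
      have hall : ∀ i j k, b i j k = 0 := by
        intro i j k
        refine leg_anti_zero (b i j) (hbnn i j) (hanti i j) 0 ?_ k (Nat.zero_le _)
        have h1 := hsum i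
        rw [← h] at h1
        exact (Finset.sum_eq_zero_iff_of_nonneg (fun j _ => hbnn i j 0)).1 h1 j (Finset.mem_univ _)
      rw [← hvec]
      funext a
      rcases a with ⟨i, j⟩ | ⟨i, j, κ⟩ <;> simp [vec, hall]
  have hinl : ∀ i (hi : Iirr S i) j, bform S β (eps S (Sum.inl ⟨⟨i, hi⟩, j⟩)) = bt S b r i j := by
    intro i hi j; rw [← hvec]; exact bt_irr S b r hf hsum i hi j
  have hbt0 : ∀ i, ¬ Iirr S i → ∀ j, bt S b r i j = 0 := fun i hi j => bt_reg S b r hsum i hi j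
  -- the tuples
  have hJ' : ∀ I : ∀ i : Fin (S.p+1), Fin (S.m i), ∑ i, bt S b r i (I i) ≤ 0 := by
    intro I
    have h1 := hJ I
    rw [bform_lin, Fintype.sum_sum_type, Fintype.sum_sigma] at h1
    simp only [epsJ, zero_mul, Finset.sum_const_zero, add_zero] at h1
    rw [← sum_irr_all S (fun i => bt S b r i (I i)) (fun i hi => hbt0 i hi _)]
    refine le_trans (le_of_eq ?_) h1
    refine Finset.sum_congr rfl fun i _ => ?_
    rw [Finset.sum_eq_single (I i.1)]
    · rw [if_pos rfl, one_mul]; exact (hinl i.1 i.2 _).symm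
    · intro j _ hj
      rw [if_neg (fun h => hj (Fin.ext h)), zero_mul]
    · simp
  -- the quadratic form
  have hqq : ∑ i, ∑ j, b i j 0 * bt S b r i j
      + ∑ x : Vr S, β (Sum.inr x) * bform S β (eps S (Sum.inr x)) = 0 := by
    have h1 : bform S β β = 0 := by
      have : bform S β β = qform S β + qform S β := rfl
      rw [this, hq]; rfl
    rw [bform_lin, Fintype.sum_sum_type, Fintype.sum_sigma] at h1
    rw [← h1]
    congr 1
    rw [← sum_irr_all S (fun i => ∑ j, b i j 0 * bt S b r i j)
      (fun i hi => Finset.sum_eq_zero fun j _ => by rw [hbt0 i hi j, mul_zero])]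
    refine Finset.sum_congr rfl fun i _ => Finset.sum_congr rfl fun j _ => ?_
    rw [hinl i.1 i.2 j]
    congr 1
    rw [hb]; simp only [ch]; rw [dif_pos i.2]
  -- maximisers
  have hmax : ∀ i, ∃ j, b i j 0 ≠ 0 ∧ ∀ j', b i j' 0 ≠ 0 → bt S b r i j' ≤ bt S b r i j := by
    intro i
    have hnon : (Finset.univ.filter fun j => b i j 0 ≠ 0).Nonempty := by
      by_contra hcon
      rw [Finset.not_nonempty_iff_eq_empty, Finset.filter_eq_empty_iff] at hcon
      have h1 := hsum i
      rw [Finset.sum_eq_zero fun j hj => not_not.1 (hcon hj)] at h1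
      omega
    obtain ⟨j, hj, hj'⟩ := Finset.exists_max_image _ (bt S b r i) hnon
    exact ⟨j, (Finset.mem_filter.1 hj).2, fun j' h => hj' j' (by simp [h])⟩
  choose J hJne hJmax using hmax
  have hterm : ∀ i j, b i j 0 * bt S b r i j ≤ b i j 0 * bt S b r i (J i) := by
    intro i j
    by_cases h : b i j 0 = 0
    · simp [h]
    · exact mul_le_mul_of_nonneg_left (hJmax i j h) (hbnn i j 0)
  have hS1 : ∑ i, ∑ j, b i j 0 * bt S b r i (J i) = r * ∑ i, bt S b r i (J i) := by
    rw [Finset.mul_sum]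
    refine Finset.sum_congr rfl fun i _ => ?_
    rw [← Finset.sum_mul, hsum]
  have hS2 : ∑ i, ∑ j, b i j 0 * bt S b r i j ≤ ∑ i, ∑ j, b i j 0 * bt S b r i (J i) :=
    Finset.sum_le_sum fun i _ => Finset.sum_le_sum fun j _ => hterm i j
  have hlt : ∀ x : Vr S, β (Sum.inr x) * bform S β (eps S (Sum.inr x)) ≤ 0 := fun x =>
    mul_nonpos_of_nonneg_of_nonpos (hnn _) (hleg x.1 x.2.1 x.2.2)
  have hS3 : ∑ x : Vr S, β (Sum.inr x) * bform S β (eps S (Sum.inr x)) ≤ 0 :=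
    Finset.sum_nonpos fun x _ => hlt x
  have hS4 : r * ∑ i, bt S b r i (J i) ≤ 0 :=
    mul_nonpos_of_nonneg_of_nonpos hrpos.le (hJ' J)
  have hZ3 : ∑ x : Vr S, β (Sum.inr x) * bform S β (eps S (Sum.inr x)) = 0 := by linarith
  have hZ4 : ∑ i, bt S b r i (J i) = 0 := by
    have : r * ∑ i, bt S b r i (J i) = 0 := by linarith
    rcases mul_eq_zero.1 this with h | h
    · omega
    · exact h
  have hZ2 : ∑ i, ∑ j, b i j 0 * bt S b r i j = ∑ i, ∑ j, b i j 0 * bt S b r i (J i) := by linarith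
  have hleg0 := (Finset.sum_eq_zero_iff_of_nonpos (fun x _ => hlt x)).1 hZ3
  have hin := (Finset.sum_eq_sum_iff_of_le
    (fun i _ => Finset.sum_le_sum fun j _ => hterm i j)).1 hZ2
  refine ⟨r, fun i => yv S b r i (J i), hf, hbnn, hrpos, hsum, hanti, ?_, ?_, ?_⟩
  · intro i j k hk
    have hkE : k < S.e i j - 1 := by
      by_contra hcon
      exact hk (hf i j _ (by omega))
    have h1 := hleg0 (⟨i, j, ⟨k, hkE⟩⟩ : Vr S) (Finset.mem_univ _)
    rw [hinr] at h1
    rcases mul_eq_zero.1 h1 with h | h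
    · exfalso; apply hk; rw [hb]; simp only [ch]; rw [dif_pos hkE]; exact h
    · simp only at h; linarith
  · intro i j hj
    have h1 := (Finset.sum_eq_sum_iff_of_le (fun j _ => hterm i j)).1 (hin i (Finset.mem_univ _))
      j (Finset.mem_univ _)
    have h2 := mul_left_cancel₀ hj h1
    simp only [bt] at h2
    linarith
  · have := bt_sum S b r J
    linarith

/-! ### Consequences of `Core` -/

section coreFacts

variable {S : Setup} {b : CF S} {r : ℤ} {Y : Fin (S.p+1) → ℤ}

theorem Core.le_r (hC : Core S b r Y) (i) (j : Fin (S.m i)) : b i j 0 ≤ r := by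
  rw [← hC.sum i]
  exact Finset.single_le_sum (f := fun j => b i j 0) (fun j _ => hC.nn i j 0) (Finset.mem_univ j)

theorem Core.pair_le (hC : Core S b r Y) (i) (j j' : Fin (S.m i)) (h : j ≠ j') :
    b i j 0 + b i j' 0 ≤ r := by
  have h1 := Finset.sum_le_sum_of_subset_of_nonneg (f := fun j => b i j 0)
    (Finset.subset_univ {j, j'}) (fun j _ _ => hC.nn i j 0)
  rw [hC.sum i, Finset.sum_pair h] at h1
  exact h1

theorem Core.single_z (hC : Core S b r Y) {i} {j : Fin (S.m i)} (h : b i j 0 = r)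
    (j' : Fin (S.m i)) (hj : j' ≠ j) (k : ℕ) : b i j' k = 0 := by
  have h1 := hC.pair_le i j' j hj
  have h2 := hC.nn i j' 0
  exact leg_anti_zero _ (hC.nn i j') (hC.anti i j') 0 (by omega) k (Nat.zero_le _)

theorem sum_dcnt_single (S : Setup) (i) (j : Fin (S.m i)) (g : Fin (S.m i) → ℤ)
    (hz : ∀ j', j' ≠ j → g j' = 0) : ∑ j', (dcnt S i j j' : ℤ) * g j' = 0 := by
  apply Finset.sum_eq_zero
  intro j' _
  by_cases h : j' = j
  · subst h; rw [dcnt_self]; simp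
  · rw [hz j' h, mul_zero]

theorem Core.single_Y (hC : Core S b r Y) {i} {j : Fin (S.m i)} (h : b i j 0 = r) :
    Y i = b i j 1 := by
  have h1 := hC.hY i j (by rw [h]; exact hC.rpos.ne')
  rw [← h1, yv, sum_dcnt_single S i j _ (fun j' hj => hC.single_z h j' hj 0)]
  linarith

theorem Core.single_lt (hC : Core S b r Y) {i} {j : Fin (S.m i)} (h : b i j 0 = r) :
    0 ≤ Y i ∧ Y i < r ∧ (Y i = 0 ∨ r ≤ 2 * Y i) := by
  rw [hC.single_Y h]
  have h1 := leg_delta_pos (b i j) (S.e i j) (fun k hk => hC.fin i j k hk) (hC.anti i j)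
    (hC.conv i j) (by rw [h]; exact hC.rpos)
  refine ⟨hC.nn i j 1, by omega, ?_⟩
  by_cases h0 : b i j 1 = 0
  · exact Or.inl h0
  · have := hC.conv i j 0 h0
    have := hC.nn i j (0 + 2)
    simp only [zero_add] at *
    right; omega

theorem Core.multi_Y (hC : Core S b r Y) {i} (h : ∀ j : Fin (S.m i), b i j 0 ≠ r) : r ≤ Y i := by
  have key : ∃ j : Fin (S.m i), b i j 0 ≠ 0 ∧ 2 * b i j 0 ≤ r := by
    have h1 : ∃ j : Fin (S.m i), b i j 0 ≠ 0 := by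
      by_contra hc
      push Not at hc
      have := hC.sum i
      simp only [hc, Finset.sum_const_zero] at this
      have := hC.rpos
      omega
    obtain ⟨j1, hj1⟩ := h1
    have h2 : ∃ j : Fin (S.m i), j ≠ j1 ∧ b i j 0 ≠ 0 := by
      by_contra hc
      push Not at hc
      have := hC.sum i
      rw [Finset.sum_eq_single j1 (fun j _ hj => hc j hj) (by simp)] at this
      exact h j1 this
    obtain ⟨j2, hne, hj2⟩ := h2
    have := hC.pair_le i j2 j1 hne
    by_cases h3 : 2 * b i j1 0 ≤ r
    · exact ⟨j1, hj1, h3⟩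
    · exact ⟨j2, hj2, by omega⟩
  obtain ⟨j, hj, hj2⟩ := key
  rw [← hC.hY i j hj, yv]
  have h1 : 0 ≤ ∑ j', (dcnt S i j j' : ℤ) * b i j' 0 :=
    Finset.sum_nonneg fun j' _ => mul_nonneg (by positivity) (hC.nn i j' 0)
  have := hC.nn i j 1
  linarith

theorem Core.multi_irr (hC : Core S b r Y) {i} (h : ∀ j : Fin (S.m i), b i j 0 ≠ r) :
    Iirr S i := by
  by_contra hi
  have := hC.sum i
  rw [sum_reg S hi ⟨0, S.hm i⟩] at this
  exact h _ this

theorem Core.reg_single (hC : Core S b r Y) {i} (hi : ¬ Iirr S i) (j : Fin (S.m i)) :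
    b i j 0 = r := by
  have := hC.sum i
  rwa [sum_reg S hi j] at this

theorem Core.Y_nonneg (hC : Core S b r Y) (i) : 0 ≤ Y i := by
  by_cases h : ∃ j : Fin (S.m i), b i j 0 = r
  · obtain ⟨j, hj⟩ := h
    exact (hC.single_lt hj).1
  · push Not at h
    exact hC.rpos.le.trans (hC.multi_Y h)

end coreFacts

/-! ### Criterion for the fundamental set -/

theorem fund_of (S : Setup) (f : CF S) (hf : fin0 S f) (nn : ∀ i j k, 0 ≤ f i j k)
    (conv : ∀ i j k, f i j (k + 1) ≠ 0 → 2 * f i j (k + 1) = f i j k + f i j (k + 2))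
    (hreg : ∀ i j, ¬ Iirr S i → f i j 1 ≠ 0 → ∑ j, f 0 j 0 = f i j 0)
    (hirr : ∀ i j, Iirr S i → i ≠ 0 → f i j 0 ≠ 0 →
      2 * f i j 0 - ∑ j', (dcnt S i j j' : ℤ) * f i j' 0 - ∑ j, f 0 j 0 - f i j 1 ≤ 0)
    (hzero : ∀ j, f 0 j 0 ≠ 0 →
      2 * f 0 j 0 - ∑ j', (dcnt S 0 j j' : ℤ) * f 0 j' 0 - f 0 j 1 - ∑ i, nb S f i ≤ 0)
    (hne : ∃ a, vec S f a ≠ 0)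
    (hconn : connSupp S (vec S f)) : fund S (vec S f) := by
  have hn : ∀ a, 0 ≤ vec S f a := by
    rintro (⟨i, j⟩ | ⟨i, j, κ⟩)
    · exact nn _ _ _
    · exact nn _ _ _
  refine ⟨?_, hn, hconn, ?_⟩
  · rintro h
    obtain ⟨a, ha⟩ := hne
    exact ha (by rw [h]; rfl)
  · intro a
    by_cases ha : vec S f a = 0
    · exact bform_nonpos_of_zero S _ hn a ha
    rcases a with ⟨⟨i, hi⟩, j⟩ | ⟨i, j, κ⟩
    · by_cases h0 : i = 0
      · subst h0
        have := bform_zero S f hf j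
        rw [show v0 S j = Sum.inl ⟨⟨0, hi⟩, j⟩ from rfl] at this
        rw [this]
        exact hzero j ha
      · rw [bform_inl S f hf i hi h0 j]
        exact hirr i j hi h0 ha
    · rw [bform_inr S f hf i j κ]
      have h1 := conv i j κ ha
      split_ifs with h
      · obtain ⟨hk, hi⟩ := h
        rw [hk] at h1 ⊢
        have ha' : f i j (κ + 1) ≠ 0 := ha
        rw [hk] at ha'
        rw [hreg i j hi ha']
        simp only [zero_add] at *
        linarith
      · linarith

/-! ### Connectivity -/

/-- adjacency within the support -/
def Adj (S : Setup) (γ : V S → ℤ) (x y : V S) : Prop :=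
  (0 < arr S x y + arr S y x) ∧ x ∈ supp S γ ∧ y ∈ supp S γ

theorem Adj.symm' {S : Setup} {γ : V S → ℤ} {x y : V S} (h : Adj S γ x y) : Adj S γ y x :=
  ⟨by rw [add_comm]; exact h.1, h.2.2, h.2.1⟩

/-- connected within the support -/
abbrev Cn (S : Setup) (γ : V S → ℤ) : V S → V S → Prop := Relation.ReflTransGen (Adj S γ)

theorem Cn.symm' {S : Setup} {γ : V S → ℤ} {x y : V S} (h : Cn S γ x y) : Cn S γ y x := by
  induction h with
  | refl => exact Relation.ReflTransGen.refl
  | tail _ h2 ih => exact Relation.ReflTransGen.head h2.symm' ih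

theorem leg_conn (S : Setup) (f : CF S) (nn : ∀ i j k, 0 ≤ f i j k)
    (anti : ∀ i j k, f i j (k + 1) ≤ f i j k) (i : Fin (S.p+1)) (j : Fin (S.m i)) :
    ∀ (k : ℕ) (hk : k < S.e i j - 1), f i j (k + 1) ≠ 0 →
      ∃ h0 : 0 < S.e i j - 1, f i j 1 ≠ 0 ∧
        Cn S (vec S f) (Sum.inr ⟨i, j, ⟨k, hk⟩⟩) (Sum.inr ⟨i, j, ⟨0, h0⟩⟩) := by
  intro k
  induction k with
  | zero => intro hk h; exact ⟨hk, h, Relation.ReflTransGen.refl⟩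
  | succ k ih =>
    intro hk h
    have h1 : f i j (k + 1) ≠ 0 := by
      have := anti i j (k + 1)
      have := nn i j (k + 1 + 1)
      omega
    obtain ⟨h0, h2, h3⟩ := ih (by omega) h1
    refine ⟨h0, h2, Relation.ReflTransGen.head ⟨?_, h, h1⟩ h3⟩
    simp [arr]

theorem leg_conn_irr (S : Setup) (f : CF S) (nn : ∀ i j k, 0 ≤ f i j k)
    (anti : ∀ i j k, f i j (k + 1) ≤ f i j k) (i : Fin (S.p+1)) (hi : Iirr S i) (j : Fin (S.m i))
    (κ : Fin (S.e i j - 1)) (h : vec S f (Sum.inr ⟨i, j, κ⟩) ≠ 0) :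
    f i j 0 ≠ 0 ∧ Cn S (vec S f) (Sum.inr ⟨i, j, κ⟩) (Sum.inl ⟨⟨i, hi⟩, j⟩) := by
  obtain ⟨h0, h1, h2⟩ := leg_conn S f nn anti i j κ κ.2 h
  have h3 : f i j 0 ≠ 0 := by
    have := anti i j 0
    have := nn i j (0 + 1)
    simp only [zero_add] at *
    omega
  refine ⟨h3, h2.tail ⟨?_, h1, h3⟩⟩
  simp [arr]

theorem leg_conn_reg (S : Setup) (f : CF S) (nn : ∀ i j k, 0 ≤ f i j k)
    (anti : ∀ i j k, f i j (k + 1) ≤ f i j k) (i : Fin (S.p+1)) (hi : ¬ Iirr S i)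
    (j : Fin (S.m i))
    (κ : Fin (S.e i j - 1)) (h : vec S f (Sum.inr ⟨i, j, κ⟩) ≠ 0)
    (j' : Fin (S.m 0)) (hj' : f 0 j' 0 ≠ 0) :
    Cn S (vec S f) (Sum.inr ⟨i, j, κ⟩) (v0 S j') := by
  obtain ⟨h0, h1, h2⟩ := leg_conn S f nn anti i j κ κ.2 h
  refine h2.tail ⟨?_, h1, hj'⟩
  have : (j : ℕ) = 0 := by have := reg_m S hi; have := j.2; omega
  simp [arr, v0, i0, hi, this]

theorem cross_conn (S : Setup) (f : CF S) (i : Fin (S.p+1)) (hi : Iirr S i) (h0 : i ≠ 0)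
    (j : Fin (S.m i)) (hj : f i j 0 ≠ 0) (j' : Fin (S.m 0)) (hj' : f 0 j' 0 ≠ 0) :
    Cn S (vec S f) (Sum.inl ⟨⟨i, hi⟩, j⟩) (v0 S j') := by
  refine Relation.ReflTransGen.single ⟨?_, hj, hj'⟩
  have := edg_inl_inl_ne S ⟨i, hi⟩ (i0 S) (fun h => h0 (congrArg Subtype.val h)) j j'
  unfold edg at this
  simp only [v0]
  rw [this]
  simp [i0, h0]

theorem conn_of (S : Setup) (f : CF S) (nn : ∀ i j k, 0 ≤ f i j k)
    (anti : ∀ i j k, f i j (k + 1) ≤ f i j k)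
    (hreg : (∀ i j, ¬ Iirr S i → f i j 1 = 0) ∨ ∃ j, f 0 j 0 ≠ 0)
    (hinl : ∀ x y : Vb S, vec S f (Sum.inl x) ≠ 0 → vec S f (Sum.inl y) ≠ 0 →
      Cn S (vec S f) (Sum.inl x) (Sum.inl y)) : connSupp S (vec S f) := by
  have key : ∀ a, vec S f a ≠ 0 → ∃ x : Vb S, vec S f (Sum.inl x) ≠ 0 ∧
      Cn S (vec S f) a (Sum.inl x) := by
    rintro (x | ⟨i, j, κ⟩) ha
    · exact ⟨x, ha, Relation.ReflTransGen.refl⟩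
    · by_cases hi : Iirr S i
      · obtain ⟨h1, h2⟩ := leg_conn_irr S f nn anti i hi j κ ha
        exact ⟨⟨⟨i, hi⟩, j⟩, h1, h2⟩
      · rcases hreg with hreg | ⟨j', hj'⟩
        · exfalso
          obtain ⟨_, h1, _⟩ := leg_conn S f nn anti i j κ κ.2 ha
          exact h1 (hreg i j hi)
        · exact ⟨⟨i0 S, j'⟩, hj', leg_conn_reg S f nn anti i hi j κ ha j' hj'⟩
  intro a ha c hc
  obtain ⟨x, hx, h1⟩ := key a ha
  obtain ⟨y, hy, h2⟩ := key c hc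
  exact (h1.trans (hinl x y hx hy)).trans h2.symm'

/-- connectivity through the `[0,j]` -/
theorem conn_zero (S : Setup) (f : CF S) (nn : ∀ i j k, 0 ≤ f i j k)
    (anti : ∀ i j k, f i j (k + 1) ≤ f i j k) (h0 : ∃ j, f 0 j 0 ≠ 0)
    (hz : ∀ j j', f 0 j 0 ≠ 0 → f 0 j' 0 ≠ 0 → Cn S (vec S f) (v0 S j) (v0 S j')) :
    connSupp S (vec S f) := by
  obtain ⟨j0, hj0⟩ := h0
  apply conn_of S f nn anti (Or.inr ⟨j0, hj0⟩)
  have key : ∀ x : Vb S, vec S f (Sum.inl x) ≠ 0 → Cn S (vec S f) (Sum.inl x) (v0 S j0) := by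
    rintro ⟨⟨i, hi⟩, j⟩ h
    by_cases h0 : i = 0
    · subst h0
      exact hz j j0 h hj0
    · exact cross_conn S f i hi h0 j h j0 hj0
  intro x y hx hy
  exact (key x hx).trans (key y hy).symm'

theorem dcnt_trans (S : Setup) (i) (j j' j'' : Fin (S.m i)) (h1 : dcnt S i j j' = 0)
    (h2 : dcnt S i j' j'' = 0) : dcnt S i j j'' = 0 := by
  unfold dcnt at *
  have e : S.q i j - S.q i j'' = (S.q i j - S.q i j') + (S.q i j' - S.q i j'') := by ring
  have := Polynomial.natDegree_add_le (S.q i j - S.q i j') (S.q i j' - S.q i j'')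
  rw [e]
  omega

theorem ultra_conn (S : Setup) (f : CF S) (i : Fin (S.p+1)) (hi : Iirr S i)
    (hsup : ∀ j, f i j 0 ≠ 0 → ∃ j', f i j' 0 ≠ 0 ∧ dcnt S i j j' ≠ 0)
    (j j' : Fin (S.m i)) (hj : f i j 0 ≠ 0) (hj' : f i j' 0 ≠ 0) :
    Cn S (vec S f) (Sum.inl ⟨⟨i, hi⟩, j⟩) (Sum.inl ⟨⟨i, hi⟩, j'⟩) := by
  have adj : ∀ j j' : Fin (S.m i), f i j 0 ≠ 0 → f i j' 0 ≠ 0 → dcnt S i j j' ≠ 0 →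
      Cn S (vec S f) (Sum.inl ⟨⟨i, hi⟩, j⟩) (Sum.inl ⟨⟨i, hi⟩, j'⟩) := by
    intro j j' h1 h2 h3
    refine Relation.ReflTransGen.single ⟨?_, h1, h2⟩
    have := edg_inl_inl_same S ⟨i, hi⟩ j j'
    unfold edg at this
    rw [this]
    exact Nat.pos_of_ne_zero h3
  by_cases h : dcnt S i j j' = 0
  · obtain ⟨j2, h2, h3⟩ := hsup j hj
    have h4 : dcnt S i j2 j' ≠ 0 := by
      intro h4
      apply h3
      apply dcnt_trans S i j j' j2 h
      rw [dcnt_comm]; exact h4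
    exact (adj j j2 hj h2 h3).trans (adj j2 j' h2 hj' h4)
  · exact adj j j' hj hj' h

theorem Core.ultra {S : Setup} {b : CF S} {r : ℤ} {Y : Fin (S.p+1) → ℤ} (hC : Core S b r Y)
    (i : Fin (S.p+1)) (hY : Y i = 2 * r) (j : Fin (S.m i)) (hj : b i j 0 ≠ 0) :
    ∃ j', b i j' 0 ≠ 0 ∧ dcnt S i j j' ≠ 0 := by
  by_contra hc
  push Not at hc
  have h1 := hC.hY i j hj
  have h2 : ∑ j', (dcnt S i j j' : ℤ) * b i j' 0 = 0 := by
    apply Finset.sum_eq_zero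
    intro j' _
    by_cases h : b i j' 0 = 0
    · rw [h, mul_zero]
    · rw [hc j' h]; simp
  rw [yv, h2] at h1
  have := hC.nn i j 0
  have := hC.anti i j 0
  simp only [zero_add] at *
  omega

/-! ### Collapsing the single irregular points -/

/-- shift the chains at all `i ∈ U` -/
def cl (S : Setup) (b : CF S) (U : Finset (Fin (S.p+1))) : CF S :=
  fun i j k => if i ∈ U then b i j (k + 1) else b i j k

open Classical in
/-- the irregular points other than `0` with a single block -/
def TT (S : Setup) (b : CF S) (r : ℤ) : Finset (Fin (S.p+1)) :=
  Finset.univ.filter (fun i => i ≠ 0 ∧ Iirr S i ∧ ∃ j, b i j 0 = r)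

theorem mem_TT (S : Setup) (b : CF S) (r : ℤ) (i) :
    i ∈ TT S b r ↔ i ≠ 0 ∧ Iirr S i ∧ ∃ j, b i j 0 = r := by
  simp [TT]

section

variable {S : Setup} {b : CF S} {r : ℤ} {Y : Fin (S.p+1) → ℤ}

theorem Core.cl_fin (hC : Core S b r Y) (U) : fin0 S (cl S b U) := by
  intro i j k hk
  unfold cl
  split_ifs
  · exact hC.fin i j _ (by omega)
  · exact hC.fin i j k hk

theorem Core.cl_nn (hC : Core S b r Y) (U) (i j k) : 0 ≤ cl S b U i j k := by
  unfold cl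
  split_ifs <;> apply hC.nn

theorem Core.cl_anti (hC : Core S b r Y) (U) (i j k) : cl S b U i j (k + 1) ≤ cl S b U i j k := by
  unfold cl
  split_ifs <;> apply hC.anti

theorem Core.cl_conv (hC : Core S b r Y) (U) (i j k) (h : cl S b U i j (k + 1) ≠ 0) :
    2 * cl S b U i j (k + 1) = cl S b U i j k + cl S b U i j (k + 2) := by
  unfold cl at *
  split_ifs at * <;> exact hC.conv _ _ _ h

theorem Core.cl_WE (hC : Core S b r Y) (U : Finset (Fin (S.p+1))) :
    U ⊆ TT S b r → WE S (vec S b) (vec S (cl S b U)) := by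
  classical
  induction U using Finset.induction_on with
  | empty =>
    intro _
    have : vec S (cl S b ∅) = vec S b := by
      apply vec_congr <;> intros <;> simp [cl]
    rw [this]; exact WE.rfl' _ _
  | insert i U hi ih =>
    intro hU
    have hU' : U ⊆ TT S b r := fun x hx => hU (Finset.mem_insert_of_mem hx)
    refine (ih hU').trans' ?_
    obtain ⟨h0, hirr, j, hj⟩ := (mem_TT S b r i).1 (hU (Finset.mem_insert_self _ _))
    have hcl : ∀ j k, cl S b U i j k = b i j k := fun j k => by simp [cl, hi]
    have h0U : (0 : Fin (S.p+1)) ∉ U := fun h => ((mem_TT S b r 0).1 (hU' h)).1 rfl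
    have hcl0 : ∀ j k, cl S b U 0 j k = b 0 j k := fun j k => by simp [cl, h0U]
    have e : vec S (cl S b (insert i U)) = vec S (shf S (cl S b U) i) := by
      have : ∀ x j k, cl S b (insert i U) x j k = shf S (cl S b U) i x j k := by
        intro x j k
        unfold cl shf
        by_cases hx : x = i
        · subst hx; simp [hi]
        · simp [hx]
      apply vec_congr <;> intros <;> apply this
    rw [e]
    refine shift_WE S _ (hC.cl_fin U) i j ?_ ?_ ?_
    · intro j' hj' k
      rw [hcl]; exact hC.single_z hj j' hj' k
    · intro hi'
      rw [bform_inl S _ (hC.cl_fin U) i hi' h0 j]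
      simp only [hcl, hcl0]
      rw [sum_dcnt_single S i j _ (fun j' hj' => hC.single_z hj j' hj' 0), hC.sum 0]
      linarith
    · intro h; exact absurd hirr h

theorem Core.sum_single (hC : Core S b r Y) {i} {j : Fin (S.m i)} (h : b i j 0 = r) (k : ℕ) :
    ∑ j', b i j' k = b i j k :=
  Finset.sum_eq_single j (fun j' _ hj' => hC.single_z h j' hj' k) (by simp)

theorem cl_zero (S : Setup) (b : CF S) (r : ℤ) (j k) : cl S b (TT S b r) 0 j k = b 0 j k := by
  have : (0 : Fin (S.p+1)) ∉ TT S b r := fun h => ((mem_TT S b r 0).1 h).1 rfl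
  simp [cl, this]

theorem cl_reg (S : Setup) (b : CF S) (r : ℤ) {i} (hi : ¬ Iirr S i) (j k) :
    cl S b (TT S b r) i j k = b i j k := by
  have : i ∉ TT S b r := fun h => hi ((mem_TT S b r i).1 h).2.1
  simp [cl, this]

theorem cl_multi (S : Setup) (b : CF S) (r : ℤ) {i} (hi : ∀ j : Fin (S.m i), b i j 0 ≠ r) (j k) :
    cl S b (TT S b r) i j k = b i j k := by
  have : i ∉ TT S b r := fun h => by
    obtain ⟨_, _, j, hj⟩ := (mem_TT S b r i).1 h
    exact hi j hj
  simp [cl, this]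

theorem cl_single (S : Setup) (b : CF S) (r : ℤ) {i} (h0 : i ≠ 0) (hi : Iirr S i)
    {j : Fin (S.m i)} (h : b i j 0 = r) (j' k) :
    cl S b (TT S b r) i j' k = b i j' (k + 1) := by
  have : i ∈ TT S b r := (mem_TT S b r i).2 ⟨h0, hi, j, h⟩
  simp [cl, this]

theorem Core.nb_single (hC : Core S b r Y) {i} (h0 : i ≠ 0) {j : Fin (S.m i)} (h : b i j 0 = r) :
    nb S (cl S b (TT S b r)) i = Y i := by
  unfold nb
  rw [if_neg h0, hC.single_Y h]
  split_ifs with hi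
  · simp only [cl_single S b r h0 hi h]
    exact hC.sum_single h 1
  · simp only [cl_reg S b r hi]
    exact hC.sum_single h 1

theorem Core.nb_multi (hC : Core S b r Y) {i} (h0 : i ≠ 0) (h : ∀ j : Fin (S.m i), b i j 0 ≠ r) :
    nb S (cl S b (TT S b r)) i = r := by
  unfold nb
  rw [if_neg h0, if_pos (hC.multi_irr h)]
  simp only [cl_multi S b r h]
  exact hC.sum i

theorem nb_zero (S : Setup) (f : CF S) : nb S f 0 = 0 := by simp [nb]

theorem Core.exists_supp (hC : Core S b r Y) (i) : ∃ j : Fin (S.m i), b i j 0 ≠ 0 := by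
  by_contra hc
  push Not at hc
  have := hC.sum i
  simp only [hc, Finset.sum_const_zero] at this
  have := hC.rpos
  omega

/-- nonzero neighbours of the `[0,*]` connect them -/
theorem nb_conn (S : Setup) (f : CF S) (hf : fin0 S f) (nn : ∀ i j k, 0 ≤ f i j k)
    (anti : ∀ i j k, f i j (k + 1) ≤ f i j k) (i) (h : nb S f i ≠ 0)
    (j j' : Fin (S.m 0)) (hj : f 0 j 0 ≠ 0) (hj' : f 0 j' 0 ≠ 0) :
    Cn S (vec S f) (v0 S j) (v0 S j') := by
  unfold nb at h
  by_cases h0 : i = 0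
  · rw [if_pos h0] at h; exact absurd rfl h
  rw [if_neg h0] at h
  by_cases hi : Iirr S i
  · rw [if_pos hi] at h
    obtain ⟨l, _, hl⟩ := Finset.exists_ne_zero_of_sum_ne_zero h
    exact (cross_conn S f i hi h0 l hl j hj).symm'.trans (cross_conn S f i hi h0 l hl j' hj')
  · rw [if_neg hi] at h
    obtain ⟨l, _, hl⟩ := Finset.exists_ne_zero_of_sum_ne_zero h
    have he : 0 < S.e i l - 1 := by
      by_contra hc
      exact hl (hf i l 1 (by omega))
    have hl' : vec S f (Sum.inr ⟨i, l, ⟨0, he⟩⟩) ≠ 0 := hl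
    exact (leg_conn_reg S f nn anti i hi l _ hl' j hj).symm'.trans
      (leg_conn_reg S f nn anti i hi l _ hl' j' hj')

theorem Core.caseA (hC : Core S b r Y)
    (hA : ∀ i, i ≠ 0 → (∀ j : Fin (S.m i), b i j 0 ≠ r) → Y i = r) :
    fund S (vec S (cl S b (TT S b r))) := by
  set f := cl S b (TT S b r) with hfdef
  have hnb : ∀ i, i ≠ 0 → nb S f i = Y i := by
    intro i h0
    by_cases h : ∃ j : Fin (S.m i), b i j 0 = r
    · obtain ⟨j, hj⟩ := h
      exact hC.nb_single h0 hj
    · push Not at h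
      rw [hA i h0 h]
      exact hC.nb_multi h0 h
  have hsumnb : ∑ i, nb S f i = 2 * r - Y 0 := by
    have h1 := hC.sumY
    have h2 : ∑ i, (Y i - nb S f i) = Y 0 - nb S f 0 :=
      Finset.sum_eq_single 0 (fun i _ hi => by rw [hnb i hi, sub_self]) (by simp)
    rw [Finset.sum_sub_distrib, nb_zero] at h2
    linarith
  have hs0 : ∑ j, f 0 j 0 = r := by
    simp only [hfdef, cl_zero]; exact hC.sum 0
  have hex : ∃ j, f 0 j 0 ≠ 0 := by
    obtain ⟨j, hj⟩ := hC.exists_supp 0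
    exact ⟨j, by rw [hfdef, cl_zero]; exact hj⟩
  refine fund_of S f (hC.cl_fin _) (hC.cl_nn _) (hC.cl_conv _) ?_ ?_ ?_ ?_ ?_
  · intro i j hi _
    rw [hs0, hfdef, cl_reg S b r hi, hC.reg_single hi j]
  · intro i j hi h0 hj
    rw [hs0]
    by_cases h : ∃ j : Fin (S.m i), b i j 0 = r
    · obtain ⟨j1, hj1⟩ := h
      simp only [hfdef, cl_single S b r h0 hi hj1, zero_add] at hj ⊢
      have hjj : j = j1 := by
        by_contra hne
        exact hj (hC.single_z hj1 j hne 1)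
      subst hjj
      rw [sum_dcnt_single S i j _ (fun j' hj' => hC.single_z hj1 j' hj' 1)]
      have := hC.conv i j 0 hj
      simp only [zero_add] at this
      norm_num
      linarith
    · push Not at h
      simp only [hfdef, cl_multi S b r h] at hj ⊢
      have h1 := hC.hY i j hj
      rw [hA i h0 h, yv] at h1
      linarith
  · intro j hj
    rw [hsumnb]
    simp only [hfdef, cl_zero] at hj ⊢
    have h1 := hC.hY 0 j hj
    rw [yv] at h1
    linarith
  · obtain ⟨j, hj⟩ := hex
    exact ⟨v0 S j, hj⟩
  · apply conn_zero S f (hC.cl_nn _) (hC.cl_anti _) hex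
    intro j j' hj hj'
    by_cases hn : ∃ i, nb S f i ≠ 0
    · obtain ⟨i, hi⟩ := hn
      exact nb_conn S f (hC.cl_fin _) (hC.cl_nn _) (hC.cl_anti _) i hi j j' hj hj'
    · push Not at hn
      have hY0 : Y 0 = 2 * r := by
        simp only [hn, Finset.sum_const_zero] at hsumnb
        linarith
      refine ultra_conn S f 0 (Or.inr rfl) ?_ j j' hj hj'
      intro j hj
      simp only [hfdef, cl_zero] at hj ⊢
      exact hC.ultra 0 hY0 j hj

end

section caseB

variable {S : Setup} {b : CF S} {r : ℤ} {Y : Fin (S.p+1) → ℤ}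

theorem Core.single_zero (hC : Core S b r Y) {i} {j : Fin (S.m i)} (h : b i j 0 = r)
    (hY : Y i = 0) (j' : Fin (S.m i)) (k : ℕ) (hk : 1 ≤ k) : b i j' k = 0 := by
  by_cases hj : j' = j
  · subst hj
    rw [hC.single_Y h] at hY
    exact leg_anti_zero _ (hC.nn i j') (hC.anti i j') 1 hY k hk
  · exact hC.single_z h j' hj k

theorem Core.caseB1 (hC : Core S b r Y) (i1 : Fin (S.p+1)) (h10 : i1 ≠ 0)
    (hm : ∀ j : Fin (S.m i1), b i1 j 0 ≠ r)
    (hs : ∀ i, i ≠ i1 → ∃ j : Fin (S.m i), b i j 0 = r)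
    (hz : ∀ i, i ≠ 0 → i ≠ i1 → Y i = 0) :
    ∃ γ, WE S (vec S (cl S b (TT S b r))) γ ∧ fund S γ := by
  obtain ⟨j0, hj0⟩ := hs 0 h10.symm
  have hY01 : Y 0 + Y i1 = 2 * r := by
    have := hC.sumY
    rw [← Finset.sum_subset (Finset.subset_univ {0, i1}), Finset.sum_pair h10.symm] at this
    · exact this
    · intro i _ hi
      simp only [Finset.mem_insert, Finset.mem_singleton, not_or] at hi
      exact hz i hi.1 hi.2
  have hY0 := hC.single_Y hj0
  set g := cl S b (TT S b r) with hg
  have hg0 : ∀ j k, g 0 j k = b 0 j k := cl_zero S b r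
  have hg1 : ∀ j k, g i1 j k = b i1 j k := cl_multi S b r hm
  have hgT : ∀ i, Iirr S i → i ≠ 0 → i ≠ i1 → ∀ j k, g i j k = 0 := by
    intro i hi h0 h1 j k
    obtain ⟨j1, hj1⟩ := hs i h1
    rw [hg, cl_single S b r h0 hi hj1]
    exact hC.single_zero hj1 (hz i h0 h1) j _ (by omega)
  have hgR : ∀ i, ¬ Iirr S i → ∀ j, g i j 1 = 0 := by
    intro i hi j
    have h0 : i ≠ 0 := fun h => hi (Or.inr h)
    have h1 : i ≠ i1 := by rintro rfl; exact hi (hC.multi_irr hm)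
    obtain ⟨j1, hj1⟩ := hs i h1
    rw [hg, cl_reg S b r hi]
    exact hC.single_zero hj1 (hz i h0 h1) j _ (by omega)
  have hnb : ∑ i, nb S g i = r := by
    rw [Finset.sum_eq_single i1]
    · exact hC.nb_multi h10 hm
    · intro i _ hi
      by_cases h0 : i = 0
      · rw [h0, nb_zero]
      · obtain ⟨j, hj⟩ := hs i hi
        rw [hg, hC.nb_single h0 hj, hz i h0 hi]
    · simp
  set f := shf S g 0 with hf
  have hf0 : ∀ j k, f 0 j k = b 0 j (k + 1) := by
    intro j k; rw [hf, shf, if_pos rfl, hg0]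
  have hfn : ∀ i, i ≠ 0 → ∀ j k, f i j k = g i j k := by
    intro i hi j k; rw [hf, shf, if_neg hi]
  have hnn : ∀ i j k, 0 ≤ f i j k := by
    intro i j k; rw [hf, shf]; split_ifs <;> apply hC.cl_nn
  have hanti : ∀ i j k, f i j (k + 1) ≤ f i j k := by
    intro i j k; simp only [hf, shf]; split_ifs <;> apply hC.cl_anti
  have hnbf : ∑ i, nb S f i = r := by
    rw [← hnb]
    apply Finset.sum_congr rfl
    intro i _
    by_cases h0 : i = 0
    · rw [h0, nb_zero, nb_zero]
    · simp only [nb, hfn i h0]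
  have hsf : ∑ j, f 0 j 0 = Y 0 := by
    simp only [hf0, hY0, zero_add]
    exact hC.sum_single hj0 1
  refine ⟨vec S f, ?_, ?_⟩
  · refine shift_WE S g (hC.cl_fin _) 0 j0 ?_ ?_ ?_
    · intro j hj k
      rw [hg0]; exact hC.single_z hj0 j hj k
    · intro hi
      have := bform_zero S g (hC.cl_fin _) j0
      rw [show v0 S j0 = Sum.inl ⟨⟨0, hi⟩, j0⟩ from rfl] at this
      rw [this, hnb]
      simp only [hg0]
      rw [sum_dcnt_single S 0 j0 _ (fun j' hj' => hC.single_z hj0 j' hj' 0)]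
      linarith
    · intro h; exact absurd (Or.inr rfl) h
  · refine fund_of S f (shf_fin0 S g (hC.cl_fin _) 0) hnn ?_ ?_ ?_ ?_ ?_ ?_
    · intro i j k h
      simp only [hf, shf] at *
      split_ifs at * <;> exact hC.cl_conv _ _ _ _ h
    · intro i j hi h
      have h0 : i ≠ 0 := fun h => hi (Or.inr h)
      rw [hfn i h0, hgR i hi] at h
      exact absurd rfl h
    · intro i j hi h0 hj
      simp only [hfn i h0] at hj ⊢
      by_cases h1 : i = i1
      · subst h1
        simp only [hg1] at hj ⊢
        rw [hsf]
        have := hC.hY i j hj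
        rw [yv] at this
        linarith
      · exact absurd (hgT i hi h0 h1 j 0) hj
    · intro j hj
      rw [hnbf]
      simp only [hf0, zero_add] at hj ⊢
      have hjj : j = j0 := by
        by_contra hne
        exact hj (hC.single_z hj0 j hne 1)
      subst hjj
      rw [sum_dcnt_single S 0 j _ (fun j' hj' => hC.single_z hj0 j' hj' 1)]
      have := hC.conv 0 j 0 hj
      simp only [zero_add] at this
      norm_num
      linarith
    · obtain ⟨j, hj⟩ := hC.exists_supp i1
      refine ⟨Sum.inl ⟨⟨i1, hC.multi_irr hm⟩, j⟩, ?_⟩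
      change f i1 j 0 ≠ 0
      rw [hfn i1 h10, hg1]; exact hj
    · by_cases hz0 : b 0 j0 1 = 0
      · have hf00 : ∀ j k, f 0 j k = 0 := by
          intro j k
          rw [hf0]
          exact hC.single_zero hj0 (by rw [hY0, hz0]) j _ (by omega)
        have hYi1 : Y i1 = 2 * r := by rw [hY0, hz0] at hY01; linarith
        apply conn_of S f hnn hanti
        · left
          intro i j hi
          have h0 : i ≠ 0 := fun h => hi (Or.inr h)
          rw [hfn i h0, hgR i hi]
        · have key : ∀ i, Iirr S i → ∀ j, f i j 0 ≠ 0 → i = i1 := by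
            intro i hi j hj
            by_contra h1
            by_cases h0 : i = 0
            · subst h0; exact hj (hf00 j 0)
            · exact hj (by rw [hfn i h0, hgT i hi h0 h1])
          rintro ⟨⟨i, hi⟩, j⟩ ⟨⟨i', hi'⟩, j'⟩ hx hy
          obtain rfl := key i hi j hx
          obtain rfl := key i' hi' j' hy
          refine ultra_conn S f i' hi ?_ j j' hx hy
          intro j hj
          simp only [hfn i' h10, hg1] at hj ⊢
          exact hC.ultra i' hYi1 j hj
      · apply conn_zero S f hnn hanti ⟨j0, by rw [hf0]; exact hz0⟩
        have key : ∀ j, f 0 j 0 ≠ 0 → j = j0 := by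
          intro j hj
          rw [hf0] at hj
          by_contra hne
          exact hj (hC.single_z hj0 j hne _)
        intro j j' hj hj'
        rw [key j hj, key j' hj']

theorem Core.caseB2 (hC : Core S b r Y) (i1 i2 : Fin (S.p+1)) (h10 : i1 ≠ 0) (h20 : i2 ≠ 0)
    (h21 : i2 ≠ i1)
    (hm : ∀ j : Fin (S.m i1), b i1 j 0 ≠ r)
    (hs : ∀ i, i ≠ i1 → ∃ j : Fin (S.m i), b i j 0 = r)
    (hY2 : Y i2 ≠ 0)
    (hz : ∀ i, i ≠ i2 → i ≠ i1 → Y i = 0) :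
    ∃ γ, WE S (vec S (cl S b (TT S b r))) γ ∧ fund S γ := by
  obtain ⟨j0, hj0⟩ := hs 0 h10.symm
  obtain ⟨j2, hj2⟩ := hs i2 h21
  have hY0 : Y 0 = 0 := hz 0 h20.symm h10.symm
  have hb0 : ∀ j k, 1 ≤ k → b 0 j k = 0 := hC.single_zero hj0 hY0
  have hY12 : Y i2 + Y i1 = 2 * r := by
    have := hC.sumY
    rw [← Finset.sum_subset (Finset.subset_univ {i2, i1}), Finset.sum_pair h21] at this
    · exact this
    · intro i _ hi
      simp only [Finset.mem_insert, Finset.mem_singleton, not_or] at hi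
      exact hz i hi.1 hi.2
  have hYb := hC.single_Y hj2
  set g := cl S b (TT S b r) with hg
  have hg0 : ∀ j k, g 0 j k = b 0 j k := cl_zero S b r
  have hg1 : ∀ j k, g i1 j k = b i1 j k := cl_multi S b r hm
  have hgT : ∀ i, Iirr S i → i ≠ 0 → i ≠ i1 → i ≠ i2 → ∀ j k, g i j k = 0 := by
    intro i hi h0 h1 h2 j k
    obtain ⟨j1, hj1⟩ := hs i h1
    rw [hg, cl_single S b r h0 hi hj1]
    exact hC.single_zero hj1 (hz i h2 h1) j _ (by omega)
  have hgR : ∀ i, ¬ Iirr S i → i ≠ i2 → ∀ j, g i j 1 = 0 := by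
    intro i hi h2 j
    have h1 : i ≠ i1 := by rintro rfl; exact hi (hC.multi_irr hm)
    obtain ⟨j1, hj1⟩ := hs i h1
    rw [hg, cl_reg S b r hi]
    exact hC.single_zero hj1 (hz i h2 h1) j _ (by omega)
  have hsum2 : ∀ F : Fin (S.p+1) → ℤ, (∀ i, i ≠ i2 → i ≠ i1 → F i = 0) →
      ∑ i, F i = F i2 + F i1 := by
    intro F hF
    rw [← Finset.sum_subset (Finset.subset_univ {i2, i1}), Finset.sum_pair h21]
    intro i _ hi
    simp only [Finset.mem_insert, Finset.mem_singleton, not_or] at hi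
    exact hF i hi.1 hi.2
  have hnb0 : ∀ i, i ≠ i2 → i ≠ i1 → nb S g i = 0 := by
    intro i h2 h1
    by_cases h0 : i = 0
    · rw [h0, nb_zero]
    · obtain ⟨j, hj⟩ := hs i h1
      rw [hg, hC.nb_single h0 hj, hz i h2 h1]
  have hnb1 : nb S g i1 = r := hC.nb_multi h10 hm
  have hnb : ∑ i, nb S g i = Y i2 + r := by
    rw [hsum2 _ hnb0, hnb1, hg, hC.nb_single h20 hj2]
  -- first step: reflect at `[0,j0]`
  set h : CF S := fun i j k => if i = 0 then
    (if (j : ℕ) = (j0 : ℕ) ∧ k = 0 then Y i2 else 0) else g i j k with hh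
  have hh0 : ∀ j, h 0 j 0 = if j = j0 then Y i2 else 0 := by
    intro j; simp only [hh, Fin.ext_iff, and_true, if_true]
  have hh0' : ∀ j k, h 0 j (k + 1) = 0 := by
    intro j k; simp [hh]
  have hhn : ∀ i, i ≠ 0 → ∀ j k, h i j k = g i j k := by
    intro i hi j k; simp [hh, hi]
  have hhsum : ∑ j, h 0 j 0 = Y i2 := by
    simp [hh0]
  have hhfin : fin0 S h := by
    intro i j k hk
    by_cases h0 : i = 0
    · subst h0
      have := S.he 0 j
      obtain ⟨k', rfl⟩ : ∃ k', k = k' + 1 := ⟨k - 1, by omega⟩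
      exact hh0' j k'
    · rw [hhn i h0]; exact hC.cl_fin _ i j k hk
  have step1 : WE S (vec S g) (vec S h) := by
    refine WE.step (v0 S j0) ?_ ?_
    · rintro (⟨⟨i, hi⟩, j⟩ | ⟨i, j, κ⟩) hne
      · change h i j 0 = g i j 0
        by_cases h0 : i = 0
        · subst h0
          have hj : j ≠ j0 := by rintro rfl; exact hne rfl
          rw [hh0, if_neg hj, hg0, hC.single_z hj0 j hj 0]
        · exact hhn i h0 j 0
      · change h i j (κ + 1) = g i j (κ + 1)
        by_cases h0 : i = 0
        · subst h0
          rw [hh0', hg0, hb0 j _ (by omega)]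
        · exact hhn i h0 j _
    · rw [bform_zero S g (hC.cl_fin _) j0, hnb]
      change h 0 j0 0 = g 0 j0 0 - _
      rw [hh0, if_pos rfl]
      simp only [hg0]
      rw [sum_dcnt_single S 0 j0 _ (fun j' hj' => hC.single_z hj0 j' hj' 0), hj0,
        hb0 j0 1 le_rfl]
      ring
  -- second step: shift at `i2`
  set f := shf S h i2 with hf
  have hf2 : ∀ j k, f i2 j k = g i2 j (k + 1) := by
    intro j k; rw [hf, shf, if_pos rfl, hhn i2 h20]
  have hfh : ∀ i, i ≠ i2 → ∀ j k, f i j k = h i j k := by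
    intro i hi j k; rw [hf, shf, if_neg hi]
  have hfg : ∀ i, i ≠ i2 → i ≠ 0 → ∀ j k, f i j k = g i j k := by
    intro i hi h0 j k; rw [hfh i hi, hhn i h0]
  have hf0 : ∀ j, f 0 j 0 = if j = j0 then Y i2 else 0 := by
    intro j; rw [hfh 0 h20.symm, hh0]
  have hf0' : ∀ j k, f 0 j (k + 1) = 0 := by
    intro j k; rw [hfh 0 h20.symm, hh0']
  have hfsum : ∑ j, f 0 j 0 = Y i2 := by simp [hf0]
  have hg2z : ∀ j, j ≠ j2 → ∀ k, g i2 j k = 0 := by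
    intro j hj k
    rw [hg, cl]
    split_ifs <;> exact hC.single_z hj2 j hj _
  have step2 : WE S (vec S h) (vec S f) := by
    refine shift_WE S h hhfin i2 j2 ?_ ?_ ?_
    · intro j hj k
      rw [hhn i2 h20]; exact hg2z j hj k
    · intro hi
      rw [bform_inl S h hhfin i2 hi h20 j2, hhsum]
      simp only [hhn i2 h20]
      rw [sum_dcnt_single S i2 j2 _ (fun j' hj' => hg2z j' hj' 0)]
      simp only [hg, cl_single S b r h20 hi hj2]
      rw [hYb]
      ring_nf
    · intro hi
      rw [hhsum, hhn i2 h20, hg, cl_reg S b r hi, hYb]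
  have hconv2 : 2 * b i2 j2 1 = r + b i2 j2 2 := by
    have := hC.conv i2 j2 0 (by rw [zero_add, ← hYb]; exact hY2)
    simp only [zero_add] at this
    rw [this, hj2]
  have hnbf2 : nb S f i2 = b i2 j2 2 := by
    unfold nb
    rw [if_neg h20]
    simp only [hf2]
    split_ifs with hi
    · rw [Finset.sum_eq_single j2 (fun j _ hj => hg2z j hj _) (by simp), hg,
        cl_single S b r h20 hi hj2]
    · rw [Finset.sum_eq_single j2 (fun j _ hj => hg2z j hj _) (by simp), hg,
        cl_reg S b r hi]
  have hnbf : ∑ i, nb S f i = b i2 j2 2 + r := by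
    rw [hsum2, hnbf2, ← hnb1]
    · simp only [nb, hfg i1 h21.symm h10]
    · intro i h2 h1
      by_cases h0 : i = 0
      · rw [h0, nb_zero]
      · rw [← hnb0 i h2 h1]
        simp only [nb, hfg i h2 h0]
  have hY2n : 0 ≤ Y i2 := hC.Y_nonneg i2
  have hnn : ∀ i j k, 0 ≤ f i j k := by
    intro i j k
    by_cases h2 : i = i2
    · subst h2; rw [hf2]; apply hC.cl_nn
    by_cases h0 : i = 0
    · subst h0
      cases k with
      | zero => rw [hf0]; split_ifs <;> simp [hY2n]
      | succ k => rw [hf0']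
    · rw [hfg i h2 h0]; apply hC.cl_nn
  have hanti : ∀ i j k, f i j (k + 1) ≤ f i j k := by
    intro i j k
    by_cases h2 : i = i2
    · subst h2; rw [hf2, hf2]; apply hC.cl_anti
    by_cases h0 : i = 0
    · subst h0
      rw [hf0']; apply hnn
    · rw [hfg i h2 h0, hfg i h2 h0]; apply hC.cl_anti
  have hex : ∃ j, f 0 j 0 ≠ 0 := ⟨j0, by rw [hf0, if_pos rfl]; exact hY2⟩
  refine ⟨vec S f, step1.trans' step2, ?_⟩
  refine fund_of S f (shf_fin0 S h hhfin i2) hnn ?_ ?_ ?_ ?_ ?_ ?_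
  · intro i j k hne
    by_cases h2 : i = i2
    · subst h2
      rw [hf2] at hne
      rw [hf2, hf2, hf2]
      exact hC.cl_conv _ _ _ _ hne
    by_cases h0 : i = 0
    · subst h0
      exact absurd (hf0' j k) hne
    · rw [hfg i h2 h0] at hne
      rw [hfg i h2 h0, hfg i h2 h0, hfg i h2 h0]
      exact hC.cl_conv _ _ _ _ hne
  · intro i j hi hne
    have h0 : i ≠ 0 := fun h => hi (Or.inr h)
    rw [hfsum]
    by_cases h2 : i = i2
    · subst h2
      have hj : j = j2 := by
        by_contra hj
        exact hne (by rw [hf2]; exact hg2z j hj _)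
      subst hj
      rw [hf2, hg, cl_reg S b r hi, hYb]
    · exact absurd (by rw [hfg i h2 h0]; exact hgR i hi h2 j) hne
  · intro i j hi h0 hj
    rw [hfsum]
    by_cases h1 : i = i1
    · subst h1
      simp only [hfg i h21.symm h10, hg1] at hj ⊢
      have := hC.hY i j hj
      rw [yv] at this
      linarith
    by_cases h2 : i = i2
    · subst h2
      have hjj : j = j2 := by
        by_contra hne
        exact hj (by rw [hf2]; exact hg2z j hne _)
      subst hjj
      simp only [hf2] at hj ⊢
      rw [sum_dcnt_single S i j _ (fun j' hj' => hg2z j' hj' _)]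
      simp only [hg, cl_single S b r h0 hi hj2, zero_add] at hj ⊢
      have := hC.conv i j 1 hj
      norm_num at this ⊢
      linarith
    · exact absurd (by rw [hfg i h2 h0]; exact hgT i hi h0 h1 h2 j 0) hj
  · intro j hj
    have hjj : j = j0 := by
      by_contra hne
      exact hj (by rw [hf0, if_neg hne])
    subst hjj
    rw [hnbf, sum_dcnt_single S 0 j _ (fun j' hj' => by rw [hf0, if_neg hj']), hf0, if_pos rfl]
    have := hf0' j 0
    rw [zero_add] at this
    rw [this]
    linarith
  · obtain ⟨j, hj⟩ := hex
    exact ⟨v0 S j, hj⟩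
  · apply conn_zero S f hnn hanti hex
    have key : ∀ j, f 0 j 0 ≠ 0 → j = j0 := by
      intro j hj
      by_contra hne
      exact hj (by rw [hf0, if_neg hne])
    intro j j' hj hj'
    rw [key j hj, key j' hj']

end caseB

theorem final_aux (S : Setup) (β : V S → ℤ) (hβ : quasiFund S β)
    (hq : qform S β = 0) : isPosRoot S β := by
  obtain ⟨r, Y, hC⟩ := core_exists S β hβ hq
  set b := ch S β with hb
  have hvec : vec S b = β := vec_ch S β
  suffices h : ∃ γ, WE S (vec S (cl S b (TT S b r))) γ ∧ fund S γ by
    obtain ⟨γ, h1, h2⟩ := h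
    have h3 := (hC.cl_WE (TT S b r) (Finset.Subset.refl _)).trans' h1
    rw [hvec] at h3
    obtain ⟨l, hl⟩ := h3
    exact ⟨Or.inr ⟨l, γ, Or.inl h2, hl⟩, hβ.2.1⟩
  by_cases hA : ∀ i, i ≠ 0 → (∀ j : Fin (S.m i), b i j 0 ≠ r) → Y i = r
  · exact ⟨_, WE.rfl' _ _, hC.caseA hA⟩
  push Not at hA
  obtain ⟨i1, h10, hm, hne⟩ := hA
  have hgt : r < Y i1 := lt_of_le_of_ne (hC.multi_Y hm) (Ne.symm hne)
  have hsub : ∀ U : Finset (Fin (S.p+1)), ∑ i ∈ U, Y i ≤ 2 * r := by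
    intro U
    rw [← hC.sumY]
    exact Finset.sum_le_sum_of_subset_of_nonneg (Finset.subset_univ U)
      (fun i _ _ => hC.Y_nonneg i)
  have hs : ∀ i, i ≠ i1 → ∃ j : Fin (S.m i), b i j 0 = r := by
    intro i hi
    by_contra hc
    push Not at hc
    have h1 := hC.multi_Y hc
    have h2 := hsub {i, i1}
    rw [Finset.sum_pair hi] at h2
    linarith
  by_cases hz : ∀ i, i ≠ 0 → i ≠ i1 → Y i = 0
  · exact hC.caseB1 i1 h10 hm hs hz
  push Not at hz
  obtain ⟨i2, h20, h21, hY2⟩ := hz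
  refine hC.caseB2 i1 i2 h10 h20 h21 hm hs hY2 ?_
  intro i h2 h1
  obtain ⟨j, hj⟩ := hs i h1
  obtain ⟨j2, hj2⟩ := hs i2 h21
  rcases (hC.single_lt hj).2.2 with h | h
  · exact h
  rcases (hC.single_lt hj2).2.2 with h' | h'
  · exact absurd h' hY2
  have h3 := hsub {i, i2, i1}
  rw [Finset.sum_insert (by simp [h2, h1]), Finset.sum_pair h21] at h3
  linarith

/-- If `β ∈ F̃` and `q(β) = 0`, then `β` is a positive root of the quiver `Q`. -/
theorem statement12 (S : Setup) (β : V S → ℤ) (hβ : quasiFund S β)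
    (hq : qform S β = 0) : isPosRoot S β := by
  exact final_aux S β hβ hq

end

end DS
end

section
/- Let R̃^+ denote the set of positive roots of Q lying in L. If α ∈ R̃^+ and 𝐢 ∈ J are such that s_𝐢(α) ∉ R̃^+, then α = ε_𝐢. -/
open Polynomial Matrix BigOperators

namespace DS

noncomputable section

namespace Gen

variable {X : Type*} [DecidableEq X]

/-- coordinate vector -/
def ev (a : X) : X → ℤ := Pi.single a 1

/-- reflection -/
def rf (f : X → (X → ℤ) →ₗ[ℤ] ℤ) (a : X) : Module.End ℤ (X → ℤ) :=
  LinearMap.id - (f a).smulRight (ev a)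

theorem rf_apply (f : X → (X → ℤ) →ₗ[ℤ] ℤ) (a : X) (x : X → ℤ) :
    rf f a x = x - f a x • ev a := by
  simp [rf]

/-- product of a word -/
def wd (f : X → (X → ℤ) →ₗ[ℤ] ℤ) (l : List X) : Module.End ℤ (X → ℤ) := (l.map (rf f)).prod

theorem wd_nil (f : X → (X → ℤ) →ₗ[ℤ] ℤ) : wd f [] = 1 := rfl

theorem wd_cons (f : X → (X → ℤ) →ₗ[ℤ] ℤ) (a : X) (l : List X) :
    wd f (a :: l) = rf f a * wd f l := by simp [wd]

theorem wd_append (f : X → (X → ℤ) →ₗ[ℤ] ℤ) (l l' : List X) :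
    wd f (l ++ l') = wd f l * wd f l' := by simp [wd]

structure Good (f : X → (X → ℤ) →ₗ[ℤ] ℤ) : Prop where
  two : ∀ a, f a (ev a) = 2
  neg : ∀ a b, a ≠ b → f a (ev b) ≤ 0
  symm : ∀ a b, f a (ev b) = f b (ev a)

theorem rf_sq {f : X → (X → ℤ) →ₗ[ℤ] ℤ} (hf : Good f) (a : X) : rf f a * rf f a = 1 := by
  refine LinearMap.ext fun x => ?_
  simp only [Module.End.mul_apply, rf_apply, map_sub, map_smul, hf.two, Module.End.one_apply]
  funext i
  simp only [Pi.sub_apply, Pi.smul_apply, smul_eq_mul]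
  ring

/-- `u` is a reduced word in `a,b` and `u a` is not shorter -/
def HH (f : X → (X → ℤ) →ₗ[ℤ] ℤ) (a b : X) (u : List X) : Prop :=
  (∀ c ∈ u, c = a ∨ c = b) ∧
  (∀ u' : List X, (∀ c ∈ u', c = a ∨ c = b) → wd f u' = wd f u → u.length ≤ u'.length) ∧
  (∀ u' : List X, (∀ c ∈ u', c = a ∨ c = b) → wd f u' = wd f u * rf f a → u.length ≤ u'.length)

theorem HH_tail {f : X → (X → ℤ) →ₗ[ℤ] ℤ} {a b c : X} {u : List X} (h : HH f a b (c :: u)) :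
    HH f a b u := by
  obtain ⟨h1, h2, h3⟩ := h
  refine ⟨fun d hd => h1 d (List.mem_cons_of_mem _ hd), fun u' hu' he => ?_, fun u' hu' he => ?_⟩
  · have := h2 (c :: u') (by
      intro d hd
      rcases List.mem_cons.1 hd with rfl | hd
      · exact h1 _ (by simp)
      · exact hu' d hd) (by rw [wd_cons, wd_cons, he])
    simpa using this
  · have := h3 (c :: u') (by
      intro d hd
      rcases List.mem_cons.1 hd with rfl | hd
      · exact h1 _ (by simp)
      · exact hu' d hd) (by rw [wd_cons, wd_cons, he, mul_assoc])
    simpa using this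

/-- alternating words -/
def alt (a b : X) : ℕ → List X
  | 0 => []
  | k+1 => (if Even k then b else a) :: alt a b k

theorem alt_length (a b : X) (k : ℕ) : (alt a b k).length = k := by
  induction k with
  | zero => rfl
  | succ k ih => simp [alt, ih]

theorem HH_alt {f : X → (X → ℤ) →ₗ[ℤ] ℤ} (hf : Good f) {a b : X} (u : List X)
    (h : HH f a b u) : u = alt a b u.length := by
  induction u with
  | nil => rfl
  | cons c u ih =>
    have hu := ih (HH_tail h)
    obtain ⟨h1, h2, h3⟩ := h
    have hc := h1 c (by simp)
    rw [List.length_cons, alt]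
    cases hk : u.length with
    | zero =>
      have hu0 : u = [] := List.length_eq_zero_iff.1 hk
      subst hu0
      rcases hc with rfl | rfl
      · have := h3 [] (by simp) (by simp [wd_cons, wd_nil, rf_sq hf])
        simp at this
      · simp [alt]
    | succ k =>
      rw [hk] at hu
      rw [← hu]
      congr 1
      rw [alt] at hu
      have key : c ≠ (if Even k then b else a) := by
        intro hcc
        have h4 := h2 (alt a b k) (by
          intro d hd
          exact h1 d (by rw [hu]; simp [hd])) (by
            rw [hu, wd_cons, wd_cons, ← hcc, ← mul_assoc, rf_sq hf, one_mul])
        rw [hu] at h4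
        simp at h4
      by_cases hev : Even k
      · have : ¬ Even (k+1) := by simpa [Nat.even_add_one] using hev
        simp only [hev, if_true] at key
        simp only [this, if_false]
        tauto
      · have : Even (k+1) := by simpa [Nat.even_add_one] using hev
        simp only [hev, if_false] at key
        simp only [this, if_true]
        tauto

theorem HH_alt_le {f : X → (X → ℤ) →ₗ[ℤ] ℤ} {a b : X} (j k : ℕ) (h : HH f a b (alt a b (j + k))) :
    HH f a b (alt a b j) := by
  induction k with
  | zero => exact h
  | succ k ih => exact ih (HH_tail h)

theorem comm0 {f : X → (X → ℤ) →ₗ[ℤ] ℤ} (hf : Good f) (a b : X)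
    (h0 : f a (ev b) = 0) : rf f a * rf f b = rf f b * rf f a := by
  have h1 := hf.symm a b
  rw [h0] at h1
  refine LinearMap.ext fun x => ?_
  simp only [Module.End.mul_apply, rf_apply, map_sub, map_smul, h0, ← h1]
  funext i
  simp only [Pi.sub_apply, Pi.smul_apply, smul_eq_mul]
  ring

theorem braid1 {f : X → (X → ℤ) →ₗ[ℤ] ℤ} (hf : Good f) (a b : X)
    (h0 : f a (ev b) = -1) : rf f a * (rf f b * rf f a) = rf f b * (rf f a * rf f b) := by
  have h1 := hf.symm a b
  rw [h0] at h1
  refine LinearMap.ext fun x => ?_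
  simp only [Module.End.mul_apply, rf_apply, map_sub, map_smul, h0, ← h1, hf.two]
  funext i
  simp only [Pi.sub_apply, Pi.smul_apply, smul_eq_mul]
  ring

theorem rf_comb {f : X → (X → ℤ) →ₗ[ℤ] ℤ} (hf : Good f) (a b : X) (x y : ℤ) :
    rf f a (x • ev a + y • ev b) = (- f a (ev b) * y - x) • ev a + y • ev b := by
  simp only [rf_apply, map_add, map_smul, hf.two]
  funext i
  simp only [Pi.sub_apply, Pi.add_apply, Pi.smul_apply, smul_eq_mul]
  ring

theorem alt_pos2 {f : X → (X → ℤ) →ₗ[ℤ] ℤ} (hf : Good f) (a b : X)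
    (h2 : f a (ev b) ≤ -2) (k : ℕ) :
    ∃ x y : ℤ, 0 ≤ x ∧ 0 ≤ y ∧ wd f (alt a b k) (ev a) = x • ev a + y • ev b ∧
      (Even k → y ≤ x) ∧ (¬ Even k → x ≤ y) := by
  induction k with
  | zero => exact ⟨1, 0, by simp, by simp, by simp [alt, wd_nil], by simp, by simp⟩
  | succ k ih =>
    obtain ⟨x, y, hx, hy, he, h3, h4⟩ := ih
    rw [alt, wd_cons, Module.End.mul_apply, he]
    by_cases hev : Even k
    · have h5 : ¬ Even (k+1) := by simpa [Nat.even_add_one] using hev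
      rw [if_pos hev, add_comm, rf_comb hf, hf.symm b a]
      have h6 := h3 hev
      refine ⟨x, - f a (ev b) * x - y, hx, by nlinarith, by rw [add_comm], fun h => (h5 h).elim,
        fun _ => by nlinarith⟩
    · have h5 : Even (k+1) := by simpa [Nat.even_add_one] using hev
      rw [if_neg hev, rf_comb hf]
      have h6 := h4 hev
      exact ⟨- f a (ev b) * y - x, y, by nlinarith, hy, rfl, fun _ => by nlinarith,
        fun h => (h h5).elim⟩

theorem dihedral {f : X → (X → ℤ) →ₗ[ℤ] ℤ} (hf : Good f) {a b : X} (hab : a ≠ b) (u : List X)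
    (h : HH f a b u) :
    ∃ x y : ℤ, 0 ≤ x ∧ 0 ≤ y ∧ wd f u (ev a) = x • ev a + y • ev b := by
  have hu := HH_alt hf u h
  set k := u.length
  rw [hu] at h ⊢
  have hn := hf.neg a b hab
  have e1 : alt a b 1 = [b] := by simp [alt]
  have e2 : alt a b 2 = [a, b] := by simp [alt]
  have e3 : alt a b 3 = [b, a, b] := by simp [alt]
  have p0 : wd f (alt a b 0) (ev a) = (1:ℤ) • ev a + (0:ℤ) • ev b := by
    simp [alt, wd_nil]
  have p1 : wd f (alt a b 1) (ev a) = (1:ℤ) • ev a + (-f a (ev b)) • ev b := by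
    have := rf_comb hf b a 0 1
    simp only [zero_smul, one_smul, zero_add] at this
    rw [e1, wd_cons, wd_nil, mul_one, this, hf.symm a b]
    simp [add_comm]
  rcases lt_or_ge (-2) (f a (ev b)) with h2 | h2
  · have h3 : f a (ev b) = 0 ∨ f a (ev b) = -1 := by omega
    rcases h3 with h3 | h3
    · have hk : k < 2 := by
        by_contra hk
        have h4 := HH_alt_le 2 (k - 2) (by rwa [show 2 + (k - 2) = k by omega])
        have := h4.2.2 [b] (by simp) (by
          rw [e2]
          simp only [wd_cons, wd_nil, mul_one]
          rw [comm0 hf a b h3, mul_assoc, rf_sq hf, mul_one])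
        simp [alt_length] at this
      interval_cases hk' : k
      · exact ⟨1, 0, by simp, by simp, p0⟩
      · exact ⟨1, _, by simp, by omega, p1⟩
    · have hk : k < 3 := by
        by_contra hk
        have h4 := HH_alt_le 3 (k - 3) (by rwa [show 3 + (k - 3) = k by omega])
        have := h4.2.2 [a, b] (by simp) (by
          rw [e3]
          simp only [wd_cons, wd_nil, mul_one]
          rw [← braid1 hf a b h3]
          simp only [mul_assoc]
          rw [rf_sq hf, mul_one])
        simp [alt_length] at this
      interval_cases hk' : k
      · exact ⟨1, 0, by simp, by simp, p0⟩
      · exact ⟨1, _, by simp, by omega, p1⟩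
      · refine ⟨0, 1, by simp, by simp, ?_⟩
        rw [show alt a b 2 = a :: alt a b 1 by rw [e1, e2], wd_cons, Module.End.mul_apply, p1,
          rf_comb hf, h3]
        norm_num
  · obtain ⟨x, y, hx, hy, he, -⟩ := alt_pos2 hf a b h2 k
    exact ⟨x, y, hx, hy, he⟩

/-- reduced word -/
def Red (f : X → (X → ℤ) →ₗ[ℤ] ℤ) (l : List X) : Prop :=
  ∀ l', wd f l' = wd f l → l.length ≤ l'.length

theorem exists_red (f : X → (X → ℤ) →ₗ[ℤ] ℤ) (l : List X) :
    ∃ l', wd f l' = wd f l ∧ Red f l' := by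
  classical
  have hex : ∃ n, ∃ l', wd f l' = wd f l ∧ l'.length = n := ⟨_, l, rfl, rfl⟩
  obtain ⟨l', h1, h2⟩ := Nat.find_spec hex
  refine ⟨l', h1, fun l'' h => ?_⟩
  rw [h2]
  exact Nat.find_min' hex ⟨l'', h.trans h1, rfl⟩

theorem main_pos {f : X → (X → ℤ) →ₗ[ℤ] ℤ} (hf : Good f) (n : ℕ) : ∀ (l : List X) (a : X),
    l.length = n → Red f l → (∀ l', wd f l' = wd f l * rf f a → l.length ≤ l'.length) →
    0 ≤ wd f l (ev a) := by
  induction n using Nat.strong_induction_on with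
  | _ n ih =>
  intro l a hn hred hla
  rcases List.eq_nil_or_concat l with rfl | ⟨l0, b, hl⟩
  · rw [wd_nil, Module.End.one_apply]
    exact Pi.single_nonneg.2 zero_le_one
  · rw [List.concat_eq_append] at hl
    have hab : a ≠ b := by
      rintro rfl
      have := hla l0 (by rw [hl, wd_append, wd_cons, wd_nil, mul_one, mul_assoc, rf_sq hf, mul_one])
      simp [hl] at this
    classical
    have hex : ∃ k, ∃ v u : List X, v.length = k ∧ (∀ c ∈ u, c = a ∨ c = b) ∧
        wd f v * wd f u = wd f l ∧ v.length + u.length ≤ l.length :=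
      ⟨_, l0, [b], rfl, by simp, by rw [hl, wd_append], by simp [hl]⟩
    have hk0 := Nat.find_min' hex (⟨l0, [b], rfl, by simp, by rw [hl, wd_append], by simp [hl]⟩ :
      ∃ v u : List X, v.length = l0.length ∧ (∀ c ∈ u, c = a ∨ c = b) ∧
        wd f v * wd f u = wd f l ∧ v.length + u.length ≤ l.length)
    obtain ⟨v, u, hv, hu, hvu, hlen⟩ := Nat.find_spec hex
    have hvn : v.length < n := by
      rw [hv]
      have : l.length = l0.length + 1 := by simp [hl]
      omega
    have hvred : Red f v := by
      intro v' hv'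
      have := hred (v' ++ u) (by rw [wd_append, hv', hvu])
      rw [List.length_append] at this
      omega
    have hvc : ∀ c, (c = a ∨ c = b) → 0 ≤ wd f v (ev c) := by
      intro c hc
      refine ih _ hvn v c rfl hvred ?_
      intro v' hv'
      by_contra hlt
      have := Nat.find_min' hex ⟨v', c :: u, rfl, by
        intro d hd
        rcases List.mem_cons.1 hd with rfl | hd
        · exact hc
        · exact hu d hd, by
          rw [hv', wd_cons, mul_assoc, ← mul_assoc (rf f c), rf_sq hf, one_mul, hvu], by
          rw [List.length_cons]; omega⟩
      omega
    obtain ⟨x, y, hx, hy, hxy⟩ := dihedral hf hab u ⟨hu, fun u' _ he => by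
        have := hred (v ++ u') (by rw [wd_append, he, hvu])
        rw [List.length_append] at this
        omega, fun u' _ he => by
        have := hla (v ++ u') (by rw [wd_append, he, ← mul_assoc, hvu])
        rw [List.length_append] at this
        omega⟩
    rw [← hvu, Module.End.mul_apply, hxy, map_add, map_smul, map_smul]
    exact add_nonneg (smul_nonneg hx (hvc a (Or.inl rfl))) (smul_nonneg hy (hvc b (Or.inr rfl)))

theorem real_sign {f : X → (X → ℤ) →ₗ[ℤ] ℤ} (hf : Good f) (l : List X) (a : X) :
    0 ≤ wd f l (ev a) ∨ wd f l (ev a) ≤ 0 := by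
  obtain ⟨l0, h0, hr⟩ := exists_red f l
  rw [← h0]
  by_cases h : ∀ l', wd f l' = wd f l0 * rf f a → l0.length ≤ l'.length
  · exact Or.inl (main_pos hf _ l0 a rfl hr h)
  · right
    push Not at h
    obtain ⟨l1, h1, hlt⟩ := h
    obtain ⟨l2, h2, hr2⟩ := exists_red f l1
    have hle := hr2 l1 h2.symm
    have := main_pos hf _ l2 a rfl hr2 (fun l' hl' => by
      rw [h2, h1, mul_assoc, rf_sq hf, mul_one] at hl'
      have := hr l' hl'
      omega)
    rw [h2, h1, Module.End.mul_apply, rf_apply, hf.two, map_sub, map_smul] at this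
    intro i
    have h3 := this i
    simp only [Pi.zero_apply, Pi.sub_apply, Pi.smul_apply, smul_eq_mul] at h3 ⊢
    linarith

theorem imag_sign {f : X → (X → ℤ) →ₗ[ℤ] ℤ} (hf : Good f) (g : X → ℤ) (hg : 0 ≤ g)
    (hfg : ∀ a, f a g ≤ 0) (l : List X) : 0 ≤ wd f l g := by
  obtain ⟨l0, h0, hr⟩ := exists_red f l
  rw [← h0]
  clear h0
  induction l0 using List.reverseRecOn with
  | nil => simpa [wd_nil] using hg
  | append_singleton l0 a ih =>
    have hr0 : Red f l0 := by
      intro l' hl'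
      have := hr (l' ++ [a]) (by rw [wd_append, wd_append, hl'])
      simpa using this
    have h1 := main_pos hf _ l0 a rfl hr0 (fun l' hl' => by
      have := hr l' (by rw [hl', wd_append, wd_cons, wd_nil, mul_one])
      simp at this
      omega)
    have h2 := ih hr0
    rw [wd_append, wd_cons, wd_nil, mul_one, Module.End.mul_apply, rf_apply, map_sub, map_smul]
    intro i
    have h3 := h1 i
    have h4 := h2 i
    have h5 := hfg a
    simp only [Pi.zero_apply, Pi.sub_apply, Pi.smul_apply, smul_eq_mul] at h3 h4 ⊢
    nlinarith

end Gen

theorem eform_add_left (S : Setup) (x y z : V S → ℤ) :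
    eform S (x + y) z = eform S x z + eform S y z := by
  simp only [eform, Pi.add_apply, mul_add, add_mul, Finset.sum_add_distrib]
  ring

theorem eform_add_right (S : Setup) (x y z : V S → ℤ) :
    eform S z (x + y) = eform S z x + eform S z y := by
  simp only [eform, Pi.add_apply, mul_add, Finset.sum_add_distrib]
  ring

theorem eform_smul_left (S : Setup) (c : ℤ) (x z : V S → ℤ) :
    eform S (c • x) z = c * eform S x z := by
  simp only [eform, Pi.smul_apply, smul_eq_mul, mul_sub, Finset.mul_sum]
  congr 1
  · exact Finset.sum_congr rfl fun a _ => by ring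
  · exact Finset.sum_congr rfl fun a _ => Finset.sum_congr rfl fun b _ => by ring

theorem eform_smul_right (S : Setup) (c : ℤ) (x z : V S → ℤ) :
    eform S z (c • x) = c * eform S z x := by
  simp only [eform, Pi.smul_apply, smul_eq_mul, mul_sub, Finset.mul_sum]
  congr 1
  · exact Finset.sum_congr rfl fun a _ => by ring
  · exact Finset.sum_congr rfl fun a _ => Finset.sum_congr rfl fun b _ => by ring

theorem bform_comm (S : Setup) (x y : V S → ℤ) : bform S x y = bform S y x := by
  simp only [bform]; ring

/-- the bilinear form as a linear map in the first variable -/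
def bL (S : Setup) (y : V S → ℤ) : (V S → ℤ) →ₗ[ℤ] ℤ where
  toFun x := bform S x y
  map_add' x x' := by simp only [bform, eform_add_left, eform_add_right]; ring
  map_smul' c x := by
    simp only [bform, eform_smul_left, eform_smul_right, RingHom.id_apply, smul_eq_mul]; ring

theorem bL_apply (S : Setup) (x y : V S → ℤ) : bL S y x = bform S x y := rfl

theorem bform_sub_smul_left (S : Setup) (x y z : V S → ℤ) (c : ℤ) :
    bform S (x - c • y) z = bform S x z - c * bform S y z := by
  have := map_sub (bL S z) x (c • y)
  rw [map_smul] at this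
  simpa only [bL_apply, smul_eq_mul] using this

theorem bform_sub_smul_right (S : Setup) (x y z : V S → ℤ) (c : ℤ) :
    bform S z (x - c • y) = bform S z x - c * bform S z y := by
  rw [bform_comm, bform_sub_smul_left, bform_comm S x, bform_comm S y]

theorem eps_eq (S : Setup) (a : V S) : eps S a = Gen.ev a := by
  funext b
  simp [eps, Gen.ev, Pi.single_apply]

/-- the coroot functionals -/
def fS (S : Setup) (a : V S) : (V S → ℤ) →ₗ[ℤ] ℤ := bL S (Gen.ev a)

theorem fS_apply (S : Setup) (a : V S) (x : V S → ℤ) : fS S a x = bform S x (Gen.ev a) := rfl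

theorem bform_ev (S : Setup) (a b : V S) :
    bform S (Gen.ev a) (Gen.ev b) =
      2 * (if a = b then 1 else 0) - ((arr S a b : ℤ) + arr S b a) := by
  simp only [bform, ← eps_eq]
  simp only [eform, eps, mul_ite, mul_one, mul_zero, Finset.sum_ite_eq', Finset.mem_univ, if_true]
  by_cases h : a = b
  · subst h; simp; ring
  · simp [h, Ne.symm h]; ring

theorem good (S : Setup) : Gen.Good (fS S) where
  two a := by rw [fS_apply, bform_ev, arr_self]; simp
  neg a b hab := by
    rw [fS_apply, bform_ev, if_neg hab.symm]
    have := Int.natCast_nonneg (arr S a b)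
    have := Int.natCast_nonneg (arr S b a)
    linarith
  symm a b := by rw [fS_apply, fS_apply, bform_comm]

theorem refl1_eq (S : Setup) (a : V S) (x : V S → ℤ) : refl1 S a x = Gen.rf (fS S) a x := by
  rw [Gen.rf_apply, fS_apply]
  funext b
  simp [refl1, eps_eq]

theorem reflList_eq (S : Setup) (l : List (V S)) (x : V S → ℤ) :
    reflList S l x = Gen.wd (fS S) l x := by
  induction l with
  | nil => rfl
  | cons a l ih =>
    rw [Gen.wd_cons, Module.End.mul_apply, ← ih, ← refl1_eq]
    rfl

theorem bform_rf (S : Setup) (a : V S) (x y : V S → ℤ) :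
    bform S (Gen.rf (fS S) a x) (Gen.rf (fS S) a y) = bform S x y := by
  have h2 := (good S).two a
  rw [fS_apply] at h2
  simp only [Gen.rf_apply, bform_sub_smul_left, bform_sub_smul_right, fS_apply, h2]
  rw [bform_comm S (Gen.ev a) y]
  ring

theorem bform_wd (S : Setup) (l : List (V S)) (x y : V S → ℤ) :
    bform S (Gen.wd (fS S) l x) (Gen.wd (fS S) l y) = bform S x y := by
  induction l with
  | nil => rfl
  | cons a l ih => rw [Gen.wd_cons, Module.End.mul_apply, Module.End.mul_apply, bform_rf, ih]

theorem wd_mul_reverse (S : Setup) (l : List (V S)) :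
    Gen.wd (fS S) l * Gen.wd (fS S) l.reverse = 1 := by
  induction l with
  | nil => rfl
  | cons a l ih =>
    rw [List.reverse_cons, Gen.wd_append, Gen.wd_cons, Gen.wd_cons, Gen.wd_nil, mul_one,
      mul_assoc, ← mul_assoc (Gen.wd (fS S) l), ih, one_mul, Gen.rf_sq (good S)]

theorem isRoot_sign (S : Setup) (x : V S → ℤ) (hx : isRoot S x) : 0 ≤ x ∨ x ≤ 0 := by
  rcases hx with ⟨l, a, rfl⟩ | ⟨l, g, hg | hg, rfl⟩
  · rw [reflList_eq, eps_eq]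
    exact Gen.real_sign (good S) l a
  · left
    rw [reflList_eq]
    exact Gen.imag_sign (good S) g hg.2.1 (fun a => by
      rw [fS_apply, ← eps_eq]; exact hg.2.2.2 a) l
  · right
    rw [reflList_eq]
    have := Gen.imag_sign (good S) (-g) hg.2.1 (fun a => by
      rw [fS_apply, ← eps_eq]; exact hg.2.2.2 a) l
    rw [map_neg] at this
    exact neg_nonneg.1 this

theorem fund_bform (S : Setup) (g : V S → ℤ) (hg : fund S g) : bform S g g ≤ 0 := by
  have h1 := LinearMap.pi_apply_eq_sum_univ (bL S g) g
  rw [bL_apply] at h1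
  rw [h1]
  refine Finset.sum_nonpos fun a _ => ?_
  have h2 : (fun j => if a = j then (1:ℤ) else 0) = eps S a := by
    funext j; simp [eps, eq_comm]
  rw [h2, bL_apply, bform_comm, smul_eq_mul]
  exact mul_nonpos_of_nonneg_of_nonpos (hg.2.1 a) (hg.2.2.2 a)

theorem isRoot_bform (S : Setup) (x : V S → ℤ) (hx : isRoot S x) :
    bform S x x = 2 ∨ bform S x x ≤ 0 := by
  rcases hx with ⟨l, a, rfl⟩ | ⟨l, g, hg | hg, rfl⟩
  · left
    rw [reflList_eq, eps_eq, bform_wd]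
    exact (good S).two a
  · right
    rw [reflList_eq, bform_wd]
    exact fund_bform S g hg
  · right
    rw [reflList_eq, bform_wd]
    have := fund_bform S (-g) hg
    have e1 := map_neg (bL S (-g)) g
    have e2 := map_neg (bL S g) g
    simp only [bL_apply] at e1 e2
    rw [e1, bform_comm, e2] at this
    simpa using this

theorem isRoot_wd (S : Setup) (x : V S → ℤ) (hx : isRoot S x) (l : List (V S)) :
    isRoot S (Gen.wd (fS S) l x) := by
  rcases hx with ⟨l', a, rfl⟩ | ⟨l', g, hg, rfl⟩
  · refine Or.inl ⟨l ++ l', a, ?_⟩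
    rw [reflList_eq, reflList_eq, Gen.wd_append, Module.End.mul_apply]
  · refine Or.inr ⟨l ++ l', g, hg, ?_⟩
    rw [reflList_eq, reflList_eq, Gen.wd_append, Module.End.mul_apply]

/-- the vertex `[i, j_i]` -/
def lf (S : Setup) (I : ∀ i : Fin (S.p+1), Fin (S.m i)) (i : {i : Fin (S.p+1) // Iirr S i}) : V S :=
  vI S i (I i.1)

theorem lf_inj (S : Setup) (I : ∀ i : Fin (S.p+1), Fin (S.m i))
    (i i' : {i : Fin (S.p+1) // Iirr S i}) (h : lf S I i = lf S I i') : i = i' := by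
  simp only [lf, vI] at h
  exact congrArg Sigma.fst (Sum.inl.inj h)

theorem lf_center (S : Setup) (I : ∀ i : Fin (S.p+1), Fin (S.m i))
    (i : {i : Fin (S.p+1) // Iirr S i}) (hi : i ≠ i0 S) :
    bform S (Gen.ev (lf S I (i0 S))) (Gen.ev (lf S I i)) = -1 := by
  have hi' : i.1 ≠ 0 := fun h => hi (Subtype.ext h)
  rw [bform_ev, if_neg (fun h => hi (lf_inj S I _ _ h).symm)]
  have e1 : arr S (lf S I (i0 S)) (lf S I i) = 1 := by
    simp [lf, vI, arr, hi', hi.symm, i0]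
    intro h; exact (hi h.symm).elim
  have e2 : arr S (lf S I i) (lf S I (i0 S)) = 0 := by
    simp [lf, vI, arr, hi']
    intro h; exact (hi h).elim
  rw [e1, e2]; norm_num

theorem lf_orth (S : Setup) (I : ∀ i : Fin (S.p+1), Fin (S.m i))
    (i i' : {i : Fin (S.p+1) // Iirr S i}) (hi : i ≠ i0 S) (hi' : i' ≠ i0 S) (hne : i ≠ i') :
    bform S (Gen.ev (lf S I i)) (Gen.ev (lf S I i')) = 0 := by
  have h1 : i.1 ≠ 0 := fun h => hi (Subtype.ext h)
  have h1' : i'.1 ≠ 0 := fun h => hi' (Subtype.ext h)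
  rw [bform_ev, if_neg (fun h => hne (lf_inj S I _ _ h))]
  have e1 : arr S (lf S I i) (lf S I i') = 0 := by
    simp [lf, vI, arr, h1]
    intro h; exact (hne h).elim
  have e2 : arr S (lf S I i') (lf S I i) = 0 := by
    simp [lf, vI, arr, h1']
    intro h; exact (hne h.symm).elim
  rw [e1, e2]; norm_num

theorem wd_center (S : Setup) (I : ∀ i : Fin (S.p+1), Fin (S.m i))
    (ls : List {i : Fin (S.p+1) // Iirr S i}) (hnd : ls.Nodup) (h0 : ∀ i ∈ ls, i ≠ i0 S) :
    Gen.wd (fS S) (ls.map (lf S I)) (Gen.ev (lf S I (i0 S))) =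
      Gen.ev (lf S I (i0 S)) + (ls.map fun i => Gen.ev (lf S I i)).sum := by
  induction ls with
  | nil => simp [Gen.wd_nil]
  | cons i ls ih =>
    rw [List.nodup_cons] at hnd
    have ih := ih hnd.2 (fun i hi => h0 i (List.mem_cons_of_mem _ hi))
    have hz : fS S (lf S I i) (ls.map fun i => Gen.ev (lf S I i)).sum = 0 := by
      rw [map_list_sum, List.map_map]
      apply List.sum_eq_zero
      intro x hx
      obtain ⟨i', hi', rfl⟩ := List.mem_map.1 hx
      refine lf_orth S I i' i (h0 i' (List.mem_cons_of_mem _ hi')) (h0 i (by simp)) ?_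
      rintro rfl
      exact hnd.1 hi'
    rw [List.map_cons, Gen.wd_cons, Module.End.mul_apply, ih, Gen.rf_apply, map_add, hz, fS_apply,
      lf_center S I i (h0 i (by simp)), List.map_cons, List.sum_cons]
    simp only [add_zero, neg_smul, one_smul, sub_neg_eq_add]
    abel

theorem epsJ_eq (S : Setup) (I : ∀ i : Fin (S.p+1), Fin (S.m i)) :
    epsJ S I = ∑ i, Gen.ev (lf S I i) := by
  funext b
  rw [Finset.sum_apply]
  rcases b with ⟨i, j⟩ | b
  · rw [Finset.sum_eq_single i]
    · simp only [epsJ, Gen.ev, lf, vI, Pi.single_apply]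
      congr 1
      simp [Fin.ext_iff]
    · intro i' _ hne
      simp only [Gen.ev, lf, vI, Pi.single_apply]
      rw [if_neg]
      intro h
      exact hne (congrArg Sigma.fst (Sum.inl.inj h)).symm
    · simp
  · symm
    apply Finset.sum_eq_zero
    intro i _
    simp [Gen.ev, lf, vI, Pi.single_apply]

theorem epsJ_wd (S : Setup) (I : ∀ i : Fin (S.p+1), Fin (S.m i)) :
    ∃ l, epsJ S I = Gen.wd (fS S) l (Gen.ev (lf S I (i0 S))) := by
  classical
  refine ⟨((Finset.univ.erase (i0 S)).toList).map (lf S I), ?_⟩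
  rw [wd_center S I _ (Finset.nodup_toList _) (fun i hi => by
    rw [Finset.mem_toList] at hi; exact Finset.ne_of_mem_erase hi), epsJ_eq, Finset.sum_map_toList]
  exact (Finset.add_sum_erase Finset.univ (fun i => Gen.ev (lf S I i)) (Finset.mem_univ (i0 S))).symm

theorem sJ_eq (S : Setup) (I : ∀ i : Fin (S.p+1), Fin (S.m i)) (x : V S → ℤ) :
    sJ S I x = x - bform S x (epsJ S I) • epsJ S I := by
  funext b; simp [sJ]

theorem sJ_wd (S : Setup) (I : ∀ i : Fin (S.p+1), Fin (S.m i)) (x : V S → ℤ) :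
    ∃ l, sJ S I x = Gen.wd (fS S) l x := by
  obtain ⟨l, hl⟩ := epsJ_wd S I
  refine ⟨l ++ lf S I (i0 S) :: l.reverse, ?_⟩
  rw [Gen.wd_append, Gen.wd_cons, Module.End.mul_apply, Module.End.mul_apply, Gen.rf_apply, map_sub,
    map_smul, ← hl, ← Module.End.mul_apply, wd_mul_reverse, Module.End.one_apply, sJ_eq, fS_apply]
  congr 2
  rw [← bform_wd S l (Gen.wd (fS S) l.reverse x), ← hl, ← Module.End.mul_apply, wd_mul_reverse, Module.End.one_apply]

theorem epsJ_sum (S : Setup) (I : ∀ i : Fin (S.p+1), Fin (S.m i))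
    (i : {i : Fin (S.p+1) // Iirr S i}) : ∑ j, epsJ S I (vI S i j) = 1 := by
  simp [epsJ, vI, ← Fin.ext_iff]

theorem inL_sJ (S : Setup) (I : ∀ i : Fin (S.p+1), Fin (S.m i)) (x : V S → ℤ) (hx : inL S x) :
    inL S (sJ S I x) := by
  intro i hi
  have h1 := hx i hi
  have h2 : ∑ j, epsJ S I (v0 S j) = 1 := epsJ_sum S I (i0 S)
  simp only [sJ, Finset.sum_sub_distrib, ← Finset.mul_sum, epsJ_sum, h1, h2]

/-- If `α ∈ R̃⁺` (a positive root of `Q` lying in `L`) and `𝐢 ∈ 𝒥` are such that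
`s_𝐢(α) ∉ R̃⁺`, then `α = ε_𝐢`. -/
theorem statement13 (S : Setup) (α : V S → ℤ) (I : ∀ i : Fin (S.p+1), Fin (S.m i))
    (hα : isPosRoot S α ∧ inL S α)
    (h : ¬ (isPosRoot S (sJ S I α) ∧ inL S (sJ S I α))) :
    α = epsJ S I := by
  obtain ⟨⟨hroot, hpos⟩, hL⟩ := hα
  obtain ⟨l, hl⟩ := sJ_wd S I α
  have hr : isRoot S (sJ S I α) := hl ▸ isRoot_wd S α hroot l
  have hL' := inL_sJ S I α hL
  have hnp : ¬ (0 ≤ sJ S I α) := fun h0 => h ⟨⟨hr, h0⟩, hL'⟩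
  have hneg : sJ S I α ≤ 0 := (isRoot_sign S _ hr).resolve_left hnp
  -- `α` vanishes off the support of `ε_𝐢`
  have hoff : ∀ b, epsJ S I b = 0 → α b = 0 := by
    intro b hb
    have h1 := hneg b
    simp only [sJ, hb, mul_zero, sub_zero, Pi.zero_apply] at h1
    exact le_antisymm h1 (hpos b)
  have hsum : ∀ i : {i : Fin (S.p+1) // Iirr S i},
      ∑ j, α (vI S i j) = α (lf S I i) := by
    intro i
    refine Finset.sum_eq_single (I i.1) (fun j _ hj => hoff _ ?_) (by simp)
    simp only [epsJ, vI]
    rw [if_neg]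
    exact fun h => hj (Fin.ext h)
  have hconst : ∀ i : {i : Fin (S.p+1) // Iirr S i}, α (lf S I i) = α (lf S I (i0 S)) := by
    intro i
    by_cases hi : i.1 = 0
    · have : i = i0 S := Subtype.ext hi
      rw [this]
    · have h1 := hL i hi
      rw [hsum i] at h1
      rw [← h1]
      exact hsum (i0 S)
  obtain ⟨t, ht⟩ : ∃ t, t = α (lf S I (i0 S)) := ⟨_, rfl⟩
  have hαt : α = t • epsJ S I := by
    funext b
    rw [Pi.smul_apply, smul_eq_mul]
    by_cases hb : epsJ S I b = 0
    · rw [hoff b hb, hb, mul_zero]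
    · rcases b with ⟨i, j⟩ | b
      · simp only [epsJ] at hb ⊢
        have hj : (j : ℕ) = (I i.1 : ℕ) := by
          by_contra hj
          exact hb (if_neg hj)
        rw [if_pos hj, mul_one, ht, ← hconst i]
        have : j = I i.1 := Fin.ext hj
        rw [this]
        rfl
      · exact (hb rfl).elim
  have hb2 : bform S (epsJ S I) (epsJ S I) = 2 := by
    obtain ⟨l, hl⟩ := epsJ_wd S I
    rw [hl, bform_wd]
    exact (good S).two _
  have hbt : bform S α α = t * (t * 2) := by
    have e1 := map_smul (bL S α) t (epsJ S I)
    have e2 := map_smul (bL S (epsJ S I)) t (epsJ S I)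
    rw [← hαt] at e1 e2
    simp only [bL_apply, smul_eq_mul] at e1 e2
    rw [e1, bform_comm, e2, hb2]
  have ht0 : 0 ≤ t := ht ▸ hpos _
  rcases isRoot_bform S α hroot with h2 | h2
  · rw [hbt] at h2
    have : t = 1 := by nlinarith
    rw [hαt, this, one_smul]
  · rw [hbt] at h2
    have : t = 0 := by nlinarith
    exfalso
    apply hnp
    have hα0 : α = 0 := by rw [hαt, this, zero_smul]
    have hs : sJ S I α = 0 := by rw [hl, hα0, map_zero]
    rw [hs]

end

end DS
end
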